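/- Consider the system of second-order ODEs for points q₁,…,qₙ, where qᵢ takes values in ℝ², given by q̈ᵢ = fᵢ(t, qᵢ, q̇ᵢ) + fᵢ^fr(t, qᵢ, q̇ᵢ) + fᵢ^int(t, q₁, q̇₁, …, qₙ, q̇ₙ), i = 1,…,n. Assume: (1) each fᵢ and each fᵢ^int is bounded; (2) for each i there exists dᵢ > 0 such that sup{ ⟨fᵢ^fr(t, q, p), p⟩ / ⟨p, p⟩ : t ∈ [0,T], |q| ≤ Rᵢ, ⟨p, p⟩ > dᵢ } < 0, where ⟨·,·⟩ is the Euclidean inner product on ℝ²; (3) for every t₀ ∈ ℝ and every initial state (q⁰, p⁰) with |qⱼ⁰| ≤ Rⱼ for all j, with |qᵢ⁰| = Rᵢ for at least one index i and with ⟨qᵢ⁰, pᵢ⁰⟩ = 0 for every index i for which |qᵢ⁰| = Rᵢ, every solution q(·) with q(t₀) = q⁰, q̇(t₀) = p⁰ satisfies: there exists ε > 0 such that for every t ∈ (t₀, t₀ + ε) one has |qⱼ(t)| > Rⱼ for some j. Then there exists a solution q : ℝ → (ℝ²)ⁿ such that qᵢ(t + T) = qᵢ(t) and q̇ᵢ(t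 + T) = q̇ᵢ(t) for all t and all i, and |qᵢ(t)| < Rᵢ for all t ∈ ℝ and all i = 1,…,n. -/

import Mathlib

open Set
open scoped RealInnerProductSpace

/-- A pair of functions `(q, p)` is a solution of the system
`q̈ᵢ = fᵢ(t, qᵢ, q̇ᵢ) + fᵢ^fr(t, qᵢ, q̇ᵢ) + fᵢ^int(t, q, q̇)` (qᵢ ∈ ℝ²) on the set `I ⊆ ℝ`. -/
def IsSolution1 (n : ℕ)
    (f ffr : Fin n → ℝ → EuclideanSpace ℝ (Fin 2) → EuclideanSpace ℝ (Fin 2) →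
      EuclideanSpace ℝ (Fin 2))
    (fint : Fin n → ℝ → (Fin n → EuclideanSpace ℝ (Fin 2)) →
      (Fin n → EuclideanSpace ℝ (Fin 2)) → EuclideanSpace ℝ (Fin 2))
    (q p : ℝ → Fin n → EuclideanSpace ℝ (Fin 2)) (I : Set ℝ) : Prop :=
  ∀ t ∈ I, ∀ i : Fin n,
    HasDerivAt (fun s => q s i) (p t i) t ∧
    HasDerivAt (fun s => p s i)
      (f i t (q t i) (p t i) + ffr i t (q t i) (p t i) + fint i t (q t) (p t)) t

/-
Friction beats the bounded forces at high speed, so for large `P` the states with `‖qᵢ‖ ≤ Rᵢ` and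
`‖pᵢ‖ ≤ P` form a block that motions can leave only through states at which some particle lies on
its circle and does not move inwards. Motions do leave at such states: this is clear when the
particle moves outwards. If it moves tangentially and the motion stayed inside, the leaving
condition applied to nearby tangential states with a single particle on its circle would bound the
second derivative of `Rⱼ² - ‖qⱼ‖²` by a multiple of that function and of its first derivative, so
that the function would vanish identically.

Hence the exit time is continuous. Rotating all positions and velocities by the angle `π θ` deforms
the identity to `z ↦ -z` within the block and within its exit set. Following the motion up to its
exit or to time `T`, and then rotating by an angle that grows with the time left, gives a continuous
self-map of the block. At a Brouwer fixed point the motion does not leave before `T`, since a point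
of the exit set is moved to its antipode, and so the fixed point is an initial state of a
`T`-periodic motion.
-/

section Interpolation

open Polynomial MeasureTheory

theorem exists_interpolation_weights (m : ℕ) {δ : ℝ} (hδ : 0 < δ) (x : ℝ) :
    ∃ t c : ℕ → ℝ, (∀ i ∈ Finset.range (m + 1), t i ∈ Ioo 0 δ) ∧
      ∀ Q : ℝ[X], Q.natDegree ≤ m →
        Q.eval x = ∑ i ∈ Finset.range (m + 1), c i * Q.eval (t i) := by
  have : Infinite (Ioo 0 δ) := (Ioo_infinite hδ).to_subtype
  let t : ℕ ↪ ℝ := (Infinite.natEmbedding (Ioo 0 δ)).trans (Function.Embedding.subtype _)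
  let s := Finset.range (m + 1)
  refine ⟨t, fun i => (Lagrange.basis s t i).eval x,
    fun i _ => (Infinite.natEmbedding (Ioo 0 δ) i).2, fun Q hQ => ?_⟩
  have hdeg : Q.degree < s.card := by
    rw [Finset.card_range]
    exact Polynomial.degree_lt_iff_coeff_zero _ _ |>.2 fun k hk =>
      coeff_eq_zero_of_natDegree_lt (by lia)
  have hinterp := congrArg (eval x) (Lagrange.eq_interpolate t.injective.injOn hdeg)
  simpa [Lagrange.interpolate_apply, eval_finsetSum, mul_comm] using hinterp

theorem integral_eval_eq_of_forall_mem_Ioo {α : Type*} [MeasurableSpace α] {μ : Measure α}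
    {Q : α → ℝ[X]} {m : ℕ} (hQ : ∀ a, (Q a).natDegree ≤ m) {δ C : ℝ} (hδ : 0 < δ)
    (hint : ∀ s ∈ Ioo 0 δ, Integrable (fun a => (Q a).eval s) μ)
    (hC : ∀ s ∈ Ioo 0 δ, ∫ a, (Q a).eval s ∂μ = C) (x : ℝ) :
    ∫ a, (Q a).eval x ∂μ = C := by
  obtain ⟨t, c, ht, hc⟩ := exists_interpolation_weights m hδ x
  have hsum : ∑ i ∈ Finset.range (m + 1), c i = 1 := by
    simpa using (hc 1 (by simp)).symm
  calc ∫ a, (Q a).eval x ∂μ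
      = ∑ i ∈ Finset.range (m + 1), c i * ∫ a, (Q a).eval (t i) ∂μ := by
        simp_rw [fun a => hc (Q a) (hQ a)]
        rw [integral_finsetSum _ fun i hi => (hint _ (ht i hi)).const_mul (c i)]
        simp_rw [integral_const_mul]
    _ = ∑ i ∈ Finset.range (m + 1), c i * C :=
        Finset.sum_congr rfl fun i hi => by rw [hC _ (ht i hi)]
    _ = C := by rw [← Finset.sum_mul, hsum, one_mul]

end Interpolation

section Det

open Polynomial

theorem exists_polynomial_eval_eq_det_one_add_smul {K V : Type*} [Field K] [AddCommGroup V]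
    [Module K V] [FiniteDimensional K V] (A : Module.End K V) :
    ∃ Q : K[X], Q.natDegree ≤ Module.finrank K V ∧
      ∀ s, Q.eval s = LinearMap.det (1 + s • A) := by
  let b := Module.finBasis K V
  let M := LinearMap.toMatrix b b A
  refine ⟨(X • M.map C + (1 : Matrix _ _ K).map C).det,
    by simpa only [Fintype.card_fin] using natDegree_det_X_add_C_le M 1, fun s => ?_⟩
  have hdet : LinearMap.det (1 + s • A) = (s • M + 1).det := by
    rw [← LinearMap.det_toMatrix b, map_add, map_smul, LinearMap.toMatrix_one, add_comm]
  rw [hdet, ← coe_evalRingHom, RingHom.map_det]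
  congr 1
  ext i j
  rcases eq_or_ne i j with rfl | hij
  · simp only [coe_evalRingHom, RingHom.mapMatrix_apply, Matrix.map_apply, Matrix.add_apply,
      Matrix.smul_apply, Matrix.one_apply_eq, smul_eq_mul, eval_add, eval_mul, eval_X, eval_C,
      map_one, eval_one]
  · simp only [coe_evalRingHom, RingHom.mapMatrix_apply, Matrix.map_apply, Matrix.add_apply,
      Matrix.smul_apply, Matrix.one_apply_ne hij, smul_eq_mul, eval_add, eval_mul, eval_X, eval_C,
      map_zero, eval_zero]

variable {E : Type*} [NormedAddCommGroup E] [NormedSpace ℝ E] [FiniteDimensional ℝ E]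

theorem det_one_add_pos_of_norm_lt_one {A : E →L[ℝ] E} (hA : ‖A‖ < 1) : 0 < (1 + A).det := by
  have : CompleteSpace E := FiniteDimensional.complete ℝ E
  have hunit : ∀ s ∈ Icc (0 : ℝ) 1, (1 + s • A).det ≠ 0 := fun s hs => by
    have hlt : ‖-(s • A)‖ < 1 := by
      rw [norm_neg, norm_smul, Real.norm_of_nonneg hs.1]
      exact (mul_le_of_le_one_left (norm_nonneg A) hs.2).trans_lt hA
    have hu : IsUnit (1 + s • A) := by simpa using isUnit_one_sub_of_norm_lt_one hlt
    exact ((hu.map ContinuousLinearMap.toLinearMapRingHom).map LinearMap.det).ne_zero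
  have hcont : ContinuousOn (fun s : ℝ => (1 + s • A).det) (Icc 0 1) :=
    (ContinuousLinearMap.continuous_det.comp (by fun_prop)).continuousOn
  by_contra! hneg
  have hone : (1 : E →L[ℝ] E).det = 1 := LinearMap.det_id
  obtain ⟨s, hs, h0⟩ := intermediate_value_Icc' zero_le_one hcont
    (show (0 : ℝ) ∈ Icc _ _ from ⟨by simpa using hneg, by simp [hone]⟩)
  exact hunit s hs h0

end Det

section NoRetraction

open MeasureTheory Metric
open scoped NNReal Topology

theorem exists_mem_segment_inter_frontier {E : Type*} [AddCommGroup E] [Module ℝ E]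
    [TopologicalSpace E] [IsTopologicalAddGroup E] [ContinuousSMul ℝ E] {s : Set E} {x y : E}
    (hx : x ∈ s) (hy : y ∉ s) : ∃ z ∈ segment ℝ x y, z ∈ frontier s := by
  by_contra! hne
  have hsub : segment ℝ x y ⊆ interior s ∪ interior sᶜ := fun z hz => by
    have := hne z hz
    rw [frontier_eq_closure_inter_closure] at this
    rw [interior_compl, ← compl_compl (interior s), ← closure_compl, ← compl_inter, inter_comm]
    exact this
  rcases (convex_segment x y).isPreconnected.subset_or_subset isOpen_interior isOpen_interior
    (disjoint_compl_right.mono interior_subset interior_subset) hsub with h | h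
  · exact hy (interior_subset (h (right_mem_segment ℝ x y)))
  · exact interior_subset (h (left_mem_segment ℝ x y)) hx

variable {E F : Type*} [NormedAddCommGroup E] [NormedSpace ℝ E] [NormedAddCommGroup F]

theorem lipschitzWith_indicator_of_frontier_eq_zero {s : Set E} (hs : IsClosed s) {u : E → F}
    {K : ℝ≥0} (hu : LipschitzOnWith K u s) (h0 : ∀ x ∈ frontier s, u x = 0) :
    LipschitzWith K (s.indicator u) := by
  have hcross : ∀ x ∈ s, ∀ y ∉ s, dist (s.indicator u x) (s.indicator u y) ≤ K * dist x y := by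
    intro x hx y hy
    obtain ⟨z, hz, hzs⟩ := exists_mem_segment_inter_frontier hx hy
    have hxz : dist x z ≤ dist x y := by
      rw [← (mem_segment_iff_wbtw.1 hz).dist_add_dist]
      exact le_add_of_nonneg_right dist_nonneg
    rw [indicator_of_mem hx, indicator_of_notMem hy, ← h0 z hzs]
    exact (hu.dist_le_mul x hx z (hs.frontier_subset hzs)).trans (by gcongr)
  refine LipschitzWith.of_dist_le_mul fun x y => ?_
  by_cases hx : x ∈ s <;> by_cases hy : y ∈ s
  · rw [indicator_of_mem hx, indicator_of_mem hy]
    exact hu.dist_le_mul x hx y hy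
  · exact hcross x hx y hy
  · rw [dist_comm, dist_comm x]
    exact hcross y hy x hx
  · rw [indicator_of_notMem hx, indicator_of_notMem hy, dist_self]
    positivity

theorem bijective_id_add_of_lipschitzWith {E : Type*} [NormedAddCommGroup E] [CompleteSpace E]
    {v : E → E} {K : ℝ≥0} (hv : LipschitzWith K v) (hK : K < 1) :
    Function.Bijective fun x => x + v x := by
  refine ⟨(AntilipschitzWith.id.add_lipschitzWith hv (by simpa using hK)).injective, fun y => ?_⟩
  have hcontr : ContractingWith K fun z => y - v z :=
    ⟨hK, by simpa using (LipschitzWith.const y).sub hv⟩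
  exact ⟨hcontr.fixedPoint, (sub_eq_iff_eq_add.1 hcontr.fixedPoint_isFixedPt).symm⟩

theorem image_eq_of_bijective_of_mapsTo {α : Type*} {g : α → α} (hg : Function.Bijective g)
    {s : Set α} (hs : MapsTo g s s) (hid : ∀ x ∉ s, g x = x) : g '' s = s := by
  refine hs.image_subset.antisymm fun y hy => ?_
  obtain ⟨x, rfl⟩ := hg.surjective y
  by_contra hx
  have hxs : x ∉ s := fun h => hx (mem_image_of_mem g h)
  exact hxs (hid x hxs ▸ hy)

theorem exists_lipschitzOnWith_of_contDiffAt {E F : Type*} [NormedAddCommGroup E] [NormedSpace ℝ E]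
    [NormedAddCommGroup F] [NormedSpace ℝ F] {f : E → F} {s : Set E} (hs : IsCompact s)
    (hf : ∀ x ∈ s, ContDiffAt ℝ 1 f x) : ∃ K, LipschitzOnWith K f s := by
  refine LocallyLipschitzOn.exists_lipschitzOnWith_of_compact hs fun x hx => ?_
  obtain ⟨K, t, ht, hK⟩ := (hf x hx).exists_lipschitzOnWith
  exact ⟨K, t, mem_nhdsWithin_of_mem_nhds ht, hK⟩

variable [FiniteDimensional ℝ E]

theorem integral_det_one_add_eq [MeasurableSpace E] [BorelSpace E] (μ : Measure E)
    [μ.IsAddHaarMeasure] {s : Set E} (hs : MeasurableSet s) (hμ : μ s ≠ ⊤)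
    {v : E → E} {v' : E → E →L[ℝ] E} {K : ℝ≥0} (hv : LipschitzWith K v) (hK : K < 1)
    (hv' : ∀ x ∈ s, HasFDerivAt v (v' x) x) (himage : (fun x => x + v x) '' s = s) :
    IntegrableOn (fun x => (1 + v' x).det) s μ ∧ ∫ x in s, (1 + v' x).det ∂μ = μ.real s := by
  have : CompleteSpace E := FiniteDimensional.complete ℝ E
  have hderiv : ∀ x ∈ s, HasFDerivWithinAt (fun x => x + v x) (1 + v' x) s x := fun x hx =>
    ((hasFDerivAt_id x).add (hv' x hx)).hasFDerivWithinAt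
  have habs : EqOn (fun x => |(1 + v' x).det| • (1 : ℝ)) (fun x => (1 + v' x).det) s :=
    fun x hx => by
      have hnorm : ‖v' x‖ < 1 := ((hv' x hx).le_of_lipschitz hv).trans_lt hK
      simp only [smul_eq_mul, mul_one, abs_of_pos (det_one_add_pos_of_norm_lt_one hnorm)]
  have hinj := (bijective_id_add_of_lipschitzWith hv hK).injective.injOn (s := s)
  have hI := integral_image_eq_integral_abs_det_fderiv_smul μ hs hderiv hinj fun _ => (1 : ℝ)
  have hJ := integrableOn_image_iff_integrableOn_abs_det_fderiv_smul μ hs hderiv hinj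
    fun _ => (1 : ℝ)
  rw [himage] at hI hJ
  refine ⟨(hJ.1 (integrableOn_const hμ)).congr_fun habs hs, ?_⟩
  rw [← setIntegral_congr_fun hs habs, ← hI]
  simp

theorem det_fderiv_eq_zero_of_norm_eq_one {H : Type*} [NormedAddCommGroup H]
    [InnerProductSpace ℝ H] [FiniteDimensional ℝ H] {r : H → H} {r' : H →L[ℝ] H} {x : H}
    (hr : HasFDerivAt r r' x) (hn : ∀ᶠ y in 𝓝 x, ‖r y‖ = 1) : r'.det = 0 := by
  have hconst : HasFDerivAt (fun y => ⟪r y, r y⟫) (0 : H →L[ℝ] ℝ) x :=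
    (hasFDerivAt_const (1 : ℝ) x).congr_of_eventuallyEq <| hn.mono fun y hy => by
      simp [hy]
  by_contra hdet
  have hunit : IsUnit (r' : H →ₗ[ℝ] H) :=
    (LinearMap.isUnit_iff_isUnit_det _).2 (isUnit_iff_ne_zero.2 hdet)
  obtain ⟨w, hw : r' w = r x⟩ := ((Module.End.isUnit_iff _).1 hunit).2 (r x)
  have hrad := DFunLike.congr_fun ((hr.inner ℝ hr).unique hconst) w
  simp [fderivInnerCLM_apply, hw, hn.self_of_nhds] at hrad

theorem image_ball_id_add_smul_indicator {r : E → E} {K : ℝ≥0} {s : ℝ} (hs : s ∈ Ioo (0 : ℝ) 1)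
    (hr : MapsTo r (closedBall 0 1) (closedBall 0 1))
    (hv : LipschitzWith K (s • (closedBall 0 1).indicator (r - id))) (hK : K < 1)
    (hfix : ∀ x ∈ sphere (0 : E) 1, r x = x) :
    (fun x => x + (s • (closedBall 0 1).indicator (r - id)) x) '' ball 0 1 = ball 0 1 := by
  have : CompleteSpace E := FiniteDimensional.complete ℝ E
  refine image_eq_of_bijective_of_mapsTo (bijective_id_add_of_lipschitzWith hv hK)
    (fun x hx => ?_) fun x hx => ?_
  · have hcomb : x + (s • (closedBall 0 1).indicator (r - id)) x = (1 - s) • x + s • r x := by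
      rw [Pi.smul_apply, indicator_of_mem (ball_subset_closedBall hx), Pi.sub_apply, id]
      module
    rw [← interior_closedBall _ one_ne_zero] at *
    simp only [hcomb]
    exact (convex_closedBall 0 1).combo_interior_self_mem_interior hx
      (hr (interior_subset hx)) (by linarith [hs.2]) hs.1.le (by ring)
  · rcases eq_or_ne ‖x‖ 1 with h1 | h1
    · simp [hfix x (by simpa using h1), indicator]
    · have : x ∉ closedBall (0 : E) 1 := fun h => hx (by
        rw [mem_ball_zero_iff]; exact lt_of_le_of_ne (by simpa using h) h1)
      simp [this]

/- The volume-polynomial argument of Milnor and Rogers: `x ↦ x + s • (r x - x)` maps the ball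
bijectively onto itself for small `s > 0`, and the volume of its image is a polynomial in `s`. -/
theorem integral_det_fderiv_eq [MeasurableSpace E] [BorelSpace E] (μ : Measure E)
    [μ.IsAddHaarMeasure] {r : E → E} (hr : ∀ x ∈ closedBall (0 : E) 1, ContDiffAt ℝ 1 r x)
    (hmaps : MapsTo r (closedBall 0 1) (closedBall 0 1)) (hfix : ∀ x ∈ sphere (0 : E) 1, r x = x) :
    ∫ x in ball 0 1, (fderiv ℝ r x).det ∂μ = μ.real (ball 0 1) := by
  obtain ⟨K, hK⟩ := exists_lipschitzOnWith_of_contDiffAt (isCompact_closedBall 0 1) hr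
  have hv : LipschitzWith (K + 1) ((closedBall 0 1).indicator (r - id)) := by
    refine lipschitzWith_indicator_of_frontier_eq_zero isClosed_closedBall
      (hK.sub LipschitzWith.id.lipschitzOnWith) fun x hx => ?_
    rw [frontier_closedBall _ one_ne_zero] at hx
    simp [hfix x hx]
  have hv' : ∀ s : ℝ, ∀ x ∈ ball (0 : E) 1,
      HasFDerivAt (s • (closedBall 0 1).indicator (r - id)) (s • (fderiv ℝ r x - 1)) x :=
    fun s x hx => by
      have hr' := ((hr x (ball_subset_closedBall hx)).differentiableAt one_ne_zero).hasFDerivAt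
      refine HasFDerivAt.const_smul ((hr'.sub (hasFDerivAt_id x)).congr_of_eventuallyEq ?_) s
      filter_upwards [closedBall_mem_nhds_of_mem hx] with y hy
      exact indicator_of_mem hy _
  choose Q hdeg hQ using fun x =>
    exists_polynomial_eval_eq_det_one_add_smul ((fderiv ℝ r x - 1 : E →L[ℝ] E) : Module.End ℝ E)
  replace hQ : ∀ x s, (Q x).eval s = (1 + s • (fderiv ℝ r x - 1)).det := hQ
  have hvol : ∀ s ∈ Ioo (0 : ℝ) (K + 1 : ℝ≥0)⁻¹,
      IntegrableOn (fun x => (Q x).eval s) (ball 0 1) μ ∧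
        ∫ x in ball 0 1, (Q x).eval s ∂μ = μ.real (ball (0 : E) 1) := by
    intro s hs
    have hsK : ‖s‖₊ * (K + 1) < 1 := by
      rw [← lt_inv_mul_iff₀' (by positivity), mul_one, ← NNReal.coe_lt_coe, coe_nnnorm,
        Real.norm_of_nonneg hs.1.le]
      exact hs.2
    have hs1 : s < 1 := hs.2.trans_le (by
      exact_mod_cast inv_le_one_of_one_le₀ (le_add_of_nonneg_left zero_le))
    have hvs := (lipschitzWith_smul s).comp hv
    simp_rw [hQ]
    exact integral_det_one_add_eq μ measurableSet_ball measure_ball_lt_top.ne hvs hsK (hv' s)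
      (image_ball_id_add_smul_indicator ⟨hs.1, hs1⟩ hmaps hvs hsK hfix)
  simpa only [hQ, one_smul, add_sub_cancel] using integral_eval_eq_of_forall_mem_Ioo hdeg
    (by positivity) (fun s hs => (hvol s hs).1) (fun s hs => (hvol s hs).2) 1

theorem exists_mem_sphere_apply_ne_self {H : Type*} [NormedAddCommGroup H]
    [InnerProductSpace ℝ H] [FiniteDimensional ℝ H] {r : H → H}
    (hr : ∀ x ∈ closedBall (0 : H) 1, ContDiffAt ℝ 1 r x)
    (hsphere : MapsTo r (closedBall 0 1) (sphere 0 1)) : ∃ x ∈ sphere (0 : H) 1, r x ≠ x := by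
  by_contra! hfix
  let _ : MeasurableSpace H := borel H
  have _ : BorelSpace H := ⟨rfl⟩
  have hvol := integral_det_fderiv_eq volume hr (hsphere.mono_right sphere_subset_closedBall) hfix
  have hzero : ∀ x ∈ ball (0 : H) 1, (fderiv ℝ r x).det = 0 := fun x hx =>
    det_fderiv_eq_zero_of_norm_eq_one
      ((hr x (ball_subset_closedBall hx)).differentiableAt one_ne_zero).hasFDerivAt <|
      Filter.mem_of_superset (closedBall_mem_nhds_of_mem hx) fun y hy => by simpa using hsphere hy
  rw [setIntegral_congr_fun measurableSet_ball hzero, integral_zero] at hvol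
  exact (ENNReal.toReal_pos (measure_ball_pos volume (0 : H) one_pos).ne'
    measure_ball_lt_top.ne).ne hvol

end NoRetraction

section Brouwer

open Metric Module

variable {H : Type*} [NormedAddCommGroup H] [InnerProductSpace ℝ H]

/-- A quarter of the discriminant of the quadratic equation `‖x + l • w‖ ^ 2 = 1` in `l`. -/
noncomputable def rayDiscrim (x w : H) : ℝ := ⟪x, w⟫ ^ 2 + ⟪w, w⟫ * (1 - ⟪x, x⟫)

/-- The point at which the ray from `x` in direction `w` leaves the unit ball, given by the larger
root `l` of `‖x + l • w‖ ^ 2 = 1`. -/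
noncomputable def rayExit (x w : H) : H :=
  x + ((-⟪x, w⟫ + √(rayDiscrim x w)) / ⟪w, w⟫) • w

theorem rayDiscrim_pos {x w : H} (hw : w ≠ 0) (hx : ‖x‖ ≤ 1) (hxw : ‖x‖ = 1 → 0 < ⟪x, w⟫) :
    0 < rayDiscrim x w := by
  have hww := real_inner_self_pos.2 hw
  rw [rayDiscrim, real_inner_self_eq_norm_sq x]
  rcases hx.lt_or_eq with hlt | heq
  · have : 0 < 1 - ‖x‖ ^ 2 := by nlinarith [norm_nonneg x]
    positivity
  · have := hxw heq
    rw [heq]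
    norm_num
    positivity

theorem norm_rayExit {x w : H} (hw : w ≠ 0) (hd : 0 ≤ rayDiscrim x w) : ‖rayExit x w‖ = 1 := by
  have hww := (real_inner_self_pos.2 hw).ne'
  have hsq : √(rayDiscrim x w) ^ 2 = ⟪x, w⟫ ^ 2 + ⟪w, w⟫ * (1 - ⟪x, x⟫) := Real.sq_sqrt hd
  have hinner : ⟪rayExit x w, rayExit x w⟫ = 1 := by
    simp only [rayExit, inner_add_left, inner_add_right, real_inner_smul_left,
      real_inner_smul_right, real_inner_comm x w]
    field_simp
    linear_combination hsq
  rw [real_inner_self_eq_norm_sq] at hinner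
  nlinarith [norm_nonneg (rayExit x w)]

theorem rayExit_eq_self {x w : H} (hx : ‖x‖ = 1) (hxw : 0 ≤ ⟪x, w⟫) : rayExit x w = x := by
  simp [rayExit, rayDiscrim, hx, Real.sqrt_sq hxw]

theorem contDiffAt_rayExit {w : H → H} {x : H} (hw : ContDiffAt ℝ 1 w x) (hwx : w x ≠ 0)
    (hd : rayDiscrim x (w x) ≠ 0) : ContDiffAt ℝ 1 (fun y => rayExit y (w y)) x := by
  have hid : ContDiffAt ℝ 1 (fun y : H => y) x := contDiffAt_id
  have hdiscrim : ContDiffAt ℝ 1 (fun y => rayDiscrim y (w y)) x :=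
    ((hid.inner ℝ hw).pow 2).add
      ((hw.inner ℝ hw).mul (contDiffAt_const.sub (hid.inner ℝ hid)))
  exact hid.add (((((hid.inner ℝ hw).neg).add (hdiscrim.sqrt hd)).div (hw.inner ℝ hw)
    (real_inner_self_pos.2 hwx).ne').smul hw)

variable [FiniteDimensional ℝ H]

theorem exists_fixedPoint_of_contDiff {g : H → H} (hg : ContDiff ℝ 1 g) (hg1 : ∀ x, ‖g x‖ < 1) :
    ∃ x ∈ closedBall (0 : H) 1, g x = x := by
  by_contra! hne
  have hw : ∀ x ∈ closedBall (0 : H) 1, x - g x ≠ 0 := fun x hx =>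
    sub_ne_zero.2 (hne x hx).symm
  have hout : ∀ x : H, ‖x‖ = 1 → 0 < ⟪x, x - g x⟫ := fun x hx => by
    have hcs := real_inner_le_norm x (g x)
    rw [hx, one_mul] at hcs
    rw [inner_sub_right, real_inner_self_eq_norm_sq, hx]
    linarith [hg1 x]
  have hpos : ∀ x ∈ closedBall (0 : H) 1, 0 < rayDiscrim x (x - g x) := fun x hx =>
    rayDiscrim_pos (hw x hx) (by simpa using hx) (hout x)
  obtain ⟨x, hx, hrx⟩ := exists_mem_sphere_apply_ne_self (r := fun x => rayExit x (x - g x))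
    (fun x hx => contDiffAt_rayExit (contDiffAt_id.sub hg.contDiffAt) (hw x hx) (hpos x hx).ne')
    (fun x hx => mem_sphere_zero_iff_norm.2 (norm_rayExit (hw x hx) (hpos x hx).le))
  rw [mem_sphere_zero_iff_norm] at hx
  exact hrx (rayExit_eq_self hx (hout x hx).le)

theorem exists_fixedPoint_of_continuous {f : H → H} (hf : Continuous f) (hf1 : ∀ x, ‖f x‖ ≤ 1) :
    ∃ x ∈ closedBall (0 : H) 1, f x = x := by
  by_contra! hne
  obtain ⟨x₀, hx₀, hmin⟩ := (isCompact_closedBall (0 : H) 1).exists_isMinOn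
    (nonempty_closedBall.2 zero_le_one) (f := fun x => ‖f x - x‖) (by fun_prop)
  set δ := ‖f x₀ - x₀‖
  have hδ : 0 < δ := norm_pos_iff.2 (sub_ne_zero.2 (hne x₀ hx₀))
  have hδ2 : δ ≤ 2 := (norm_sub_le _ _).trans (by
    linarith [hf1 x₀, mem_closedBall_zero_iff.1 hx₀])
  obtain ⟨g, hg, hgf, -⟩ := (hf.const_smul (1 - δ / 3)).exists_contDiff_approx 1
    (ε := fun _ => δ / 3) continuous_const fun _ => by positivity
  have happrox : ∀ x, ‖g x - (1 - δ / 3) • f x‖ < δ / 3 := fun x =>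
    (dist_eq_norm _ _).symm.trans_lt (hgf x)
  have hscale : ∀ x, ‖(1 - δ / 3) • f x‖ ≤ 1 - δ / 3 := fun x => by
    rw [norm_smul, Real.norm_of_nonneg (by linarith)]
    exact mul_le_of_le_one_right (by linarith) (hf1 x)
  obtain ⟨x, hx, hgx⟩ := exists_fixedPoint_of_contDiff hg fun x => by
    linarith [norm_le_norm_add_norm_sub' (g x) ((1 - δ / 3) • f x), hscale x, happrox x]
  have hclose : ‖f x - (1 - δ / 3) • f x‖ ≤ δ / 3 := by
    rw [show f x - (1 - δ / 3) • f x = (δ / 3) • f x by module, norm_smul,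
      Real.norm_of_nonneg (by positivity)]
    exact mul_le_of_le_one_right (by positivity) (hf1 x)
  have hfar : δ ≤ ‖f x - x‖ := hmin hx
  have hnear := happrox x
  rw [hgx, norm_sub_rev] at hnear
  linarith [norm_sub_le_norm_sub_add_norm_sub (f x) ((1 - δ / 3) • f x) x]

theorem brouwer_closedBall {f : H → H} (hf : ContinuousOn f (closedBall 0 1))
    (hmaps : MapsTo f (closedBall 0 1) (closedBall 0 1)) :
    ∃ x ∈ closedBall (0 : H) 1, f x = x := by
  obtain ⟨g, hg⟩ := ContinuousMap.exists_restrict_eq isClosed_closedBall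
    (⟨hmaps.restrict, hf.mapsToRestrict hmaps⟩ :
      C(closedBall (0 : H) 1, closedBall (0 : H) 1))
  obtain ⟨x, hx, hgx⟩ := exists_fixedPoint_of_continuous (f := fun x => (g x : H))
    (by fun_prop) fun x => mem_closedBall_zero_iff.1 (g x).2
  refine ⟨x, hx, ?_⟩
  have hgf : (g x : H) = f x := congrArg Subtype.val (DFunLike.congr_fun hg ⟨x, hx⟩)
  rw [← hgf, hgx]

theorem brouwer_convex {E : Type*} [NormedAddCommGroup E] [NormedSpace ℝ E]
    [FiniteDimensional ℝ E] {s : Set E} (hconv : Convex ℝ s) (hcomp : IsCompact s)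
    (hint : (interior s).Nonempty) {f : E → E} (hf : ContinuousOn f s) (hmaps : MapsTo f s s) :
    ∃ x ∈ s, f x = x := by
  let e : E ≃L[ℝ] EuclideanSpace ℝ (Fin (finrank ℝ E)) := toEuclidean
  obtain ⟨h, -, hball, -⟩ := exists_homeomorph_image_interior_closure_frontier_eq_unitBall
    (s := e '' s) (hconv.is_linear_image e.toLinearMap.isLinear)
    (e.toHomeomorph.image_interior s ▸ hint.image e) (hcomp.image e.continuous).isBounded
  rw [(hcomp.image e.continuous).isClosed.closure_eq] at hball
  let k : E ≃ₜ EuclideanSpace ℝ (Fin (finrank ℝ E)) := e.toHomeomorph.trans h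
  have hk : k '' s = closedBall 0 1 := by rw [← hball, ← image_comp]; rfl
  have hk' : MapsTo k.symm (closedBall 0 1) s := by
    rw [← hk]
    rintro _ ⟨x, hx, rfl⟩
    simpa using hx
  obtain ⟨y, hy, hfy⟩ := brouwer_closedBall (f := k ∘ f ∘ k.symm)
    (k.continuous.comp_continuousOn (hf.comp k.symm.continuous.continuousOn hk'))
    fun y hy => hk ▸ mem_image_of_mem k (hmaps (hk' hy))
  exact ⟨k.symm y, hk' hy, k.injective (by simpa using hfy)⟩

end Brouwer

section IntegralCurves

open Filter Metric
open scoped NNReal Topology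

variable {E : Type*} [NormedAddCommGroup E] [NormedSpace ℝ E] {v : ℝ → E → E} {K : ℝ≥0}

theorem exists_isIntegralCurve_of_forall_Ioo (hv : ∀ t, LipschitzWith K (v t)) {t₀ : ℝ} {x : E}
    (hloc : ∀ a > 0, ∃ α : ℝ → E, α t₀ = x ∧
      ∀ t ∈ Ioo (t₀ - a) (t₀ + a), HasDerivAt α (v t (α t)) t) :
    ∃ γ : ℝ → E, γ t₀ = x ∧ IsIntegralCurve γ v := by
  choose! α hα₀ hα using hloc
  have hagree : ∀ a b, 0 < a → a ≤ b → EqOn (α a) (α b) (Ioo (t₀ - a) (t₀ + a)) :=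
    fun a b ha hab =>
      ODE_solution_unique_of_mem_Ioo (v := v) (s := fun _ => univ) (K := K) (t₀ := t₀)
        (fun s _ => (hv s).lipschitzOnWith) ⟨by linarith, by linarith⟩
        (fun s hs => ⟨hα a ha s hs, trivial⟩)
        (fun s hs => ⟨hα b (ha.trans_le hab) s ⟨by linarith [hs.1], by linarith [hs.2]⟩, trivial⟩)
        ((hα₀ a ha).trans (hα₀ b (ha.trans_le hab)).symm)
  let r : ℝ → ℝ := fun t => |t - t₀| + 1
  have hr : ∀ t, 0 < r t := fun t => by positivity
  have hmem : ∀ {t b}, |t - t₀| < b → t ∈ Ioo (t₀ - b) (t₀ + b) := fun h => by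
    rw [abs_lt] at h
    exact ⟨by linarith, by linarith⟩
  refine ⟨fun t => α (r t) t, hα₀ _ (hr t₀), fun t => ?_⟩
  have hlt : |t - t₀| < r t := lt_add_one _
  refine (hα _ (hr t) t (hmem hlt)).congr_of_eventuallyEq ?_
  have hnear : ∀ᶠ s in 𝓝 t, |s - t₀| < r t :=
    (by fun_prop : ContinuousAt (fun s : ℝ => |s - t₀|) t).eventually_lt_const hlt
  filter_upwards [hnear] with s hs
  rcases le_total (r s) (r t) with hst | hts
  · exact hagree _ _ (hr s) hst (hmem (lt_add_one _))
  · exact (hagree _ _ (hr t) hts (hmem hs)).symm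

theorem exists_isIntegralCurve_of_bounded [CompleteSpace E] {L : ℝ≥0}
    (hv : ∀ t, LipschitzWith K (v t)) (hc : ∀ x, Continuous fun t => v t x)
    (hb : ∀ t x, ‖v t x‖ ≤ L) (t₀ : ℝ) (x : E) :
    ∃ γ : ℝ → E, γ t₀ = x ∧ IsIntegralCurve γ v := by
  refine exists_isIntegralCurve_of_forall_Ioo hv fun a ha => ?_
  have hpl : IsPicardLindelof v (tmin := t₀ - a) (tmax := t₀ + a)
      ⟨t₀, by constructor <;> linarith⟩ x (L * a.toNNReal) 0 L K :=
    ⟨fun t _ => (hv t).lipschitzOnWith, fun y _ => (hc y).continuousOn,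
      fun t _ y _ => hb t y, by simp [ha.le]⟩
  obtain ⟨α, hα₀, hα⟩ := hpl.exists_eq_forall_mem_Icc_hasDerivWithinAt₀
  exact ⟨α, hα₀, fun t ht =>
    (hα t (Ioo_subset_Icc_self ht)).hasDerivAt (Icc_mem_nhds ht.1 ht.2)⟩

theorem exists_isIntegralCurveAt_of_contDiff [CompleteSpace E]
    (hv : ContDiff ℝ 1 fun z : ℝ × E => v z.1 z.2) (t₀ : ℝ) (x : E) :
    ∃ γ : ℝ → E, γ t₀ = x ∧ IsIntegralCurveAt γ v t₀ := by
  let F : ℝ × E → ℝ × E := fun z => (1, v z.1 z.2)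
  have hF : ContDiff ℝ 1 F := contDiff_const.prodMk hv
  obtain ⟨α, hα₀, ε, hε, hα⟩ := (hF.contDiffAt (x := (t₀, x))
    |>.exists_forall_mem_closedBall_exists_eq_forall_mem_Ioo_hasDerivAt₀ t₀)
  have htime : ∀ t ∈ Ioo (t₀ - ε) (t₀ + ε), (α t).1 = t := by
    have hsub : ∀ t ∈ Ioo (t₀ - ε) (t₀ + ε), HasDerivAt (fun s => (α s).1 - s) 0 t := fun t ht => by
      simpa only [F, ContinuousLinearMap.coe_fst', sub_self] using!
        (hasFDerivAt_fst.comp_hasDerivAt t (hα t ht)).sub (hasDerivAt_id' t)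
    intro t ht
    have hconst := isOpen_Ioo.is_const_of_deriv_eq_zero isPreconnected_Ioo
      (fun s hs => (hsub s hs).differentiableAt.differentiableWithinAt)
      (fun s hs => (hsub s hs).deriv) ht (show t₀ ∈ Ioo (t₀ - ε) (t₀ + ε) by simp [hε])
    simpa [hα₀, sub_eq_zero] using hconst
  refine ⟨fun t => (α t).2, by simp only [hα₀], ?_⟩
  filter_upwards [Ioo_mem_nhds (by linarith : t₀ - ε < t₀) (by linarith : t₀ < t₀ + ε)] with t ht
  simpa [F, Function.comp_def, htime t ht] using hasFDerivAt_snd.comp_hasDerivAt t (hα t ht)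

theorem dist_le_of_isIntegralCurve {γ η : ℝ → E} (hv : ∀ t, LipschitzWith K (v t))
    (hγ : IsIntegralCurve γ v) (hη : IsIntegralCurve η v) (t : ℝ) :
    dist (γ t) (η t) ≤ dist (γ 0) (η 0) * Real.exp (K * |t|) := by
  have hforward : ∀ {w : ℝ → E → E} {α β : ℝ → E}, (∀ t, LipschitzWith K (w t)) →
      IsIntegralCurve α w → IsIntegralCurve β w → ∀ s, 0 ≤ s →
      dist (α s) (β s) ≤ dist (α 0) (β 0) * Real.exp (K * s) := fun hw hα hβ s hs => by
    simpa using dist_le_of_trajectories_ODE hw hα.continuous.continuousOn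
      (fun u _ => (hα u).hasDerivWithinAt) hβ.continuous.continuousOn
      (fun u _ => (hβ u).hasDerivWithinAt) le_rfl s ⟨hs, le_rfl⟩
  rcases le_total 0 t with ht | ht
  · simpa [abs_of_nonneg ht] using hforward hv hγ hη t ht
  · have hrev : ∀ t, LipschitzWith K (((-1 : ℝ) • v ∘ (· * (-1 : ℝ))) t) := fun t => by
      simpa using (hv (-t)).neg
    simpa [abs_of_nonpos ht] using
      hforward hrev (hγ.comp_mul (-1)) (hη.comp_mul (-1)) (-t) (by linarith)

theorem continuous_uncurry_of_isIntegralCurve {φ : E → ℝ → E} (hv : ∀ t, LipschitzWith K (v t))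
    (hφ₀ : ∀ x, φ x 0 = x) (hφ : ∀ x, IsIntegralCurve (φ x) v) :
    Continuous (Function.uncurry φ) := by
  rw [continuous_iff_continuousAt]
  rintro ⟨x, t⟩
  have hball : ContinuousOn (Function.uncurry φ) (univ ×ˢ closedBall 0 (|t| + 1)) := by
    refine continuousOn_prod_of_continuousOn_lipschitzOnWith _
      (Real.exp (K * (|t| + 1))).toNNReal (fun y _ => (hφ y).continuous.continuousOn)
      fun s hs => LipschitzOnWith.of_dist_le_mul fun y _ z _ => ?_
    have hs' : |s| ≤ |t| + 1 := by simpa using hs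
    calc dist (φ y s) (φ z s) ≤ dist y z * Real.exp (K * |s|) := by
          simpa only [hφ₀] using dist_le_of_isIntegralCurve hv (hφ y) (hφ z) s
      _ ≤ (Real.exp (K * (|t| + 1))).toNNReal * dist y z := by
          rw [Real.coe_toNNReal _ (Real.exp_pos _).le, mul_comm]
          gcongr
  exact hball.continuousAt (prod_mem_nhds univ_mem (closedBall_mem_nhds_of_mem (by simp)))

theorem periodic_of_isIntegralCurve {γ : ℝ → E} {T : ℝ} (hv : ∀ t, LipschitzWith K (v t))
    (hper : Function.Periodic v T) (hγ : IsIntegralCurve γ v) (hT : γ T = γ 0) :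
    Function.Periodic γ T := by
  have hshift : IsIntegralCurve (γ ∘ (· + T)) v := by
    simpa only [show v ∘ (· + T) = v from funext hper] using hγ.comp_add T
  exact congrFun (ODE_solution_unique_univ (v := v) (s := fun _ => univ) (K := K) (t₀ := 0)
    (fun s => (hv s).lipschitzOnWith) (fun s => ⟨hshift s, trivial⟩) (fun s => ⟨hγ s, trivial⟩)
    (by simpa using hT))

theorem exists_cutoff_of_periodic [FiniteDimensional ℝ E]
    (hv : ContDiff ℝ 1 fun z : ℝ × E => v z.1 z.2) {T : ℝ} (hT : 0 < T)
    (hper : Function.Periodic v T) {r : ℝ} (hr : 0 < r) :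
    ∃ (w : ℝ → E → E) (K L : ℝ≥0), (∀ t, LipschitzWith K (w t)) ∧
      (∀ x, Continuous fun t => w t x) ∧ (∀ t x, ‖w t x‖ ≤ L) ∧ Function.Periodic w T ∧
      ∀ t, EqOn (w t) (v t) (closedBall 0 r) := by
  let χ : ContDiffBump (0 : E) := ⟨r, 2 * r, hr, by linarith⟩
  let ψ : ContDiffBump (0 : ℝ) := ⟨T, 2 * T, hT, by linarith⟩
  let w : ℝ → E → E := fun t x => χ x • v t x
  let G : ℝ × E → E := fun z => ψ z.1 • w z.1 z.2
  have hG : ContDiff ℝ 1 G :=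
    (ψ.contDiff.comp contDiff_fst).smul ((χ.contDiff.comp contDiff_snd).smul hv)
  have hGsupp : HasCompactSupport G := by
    refine HasCompactSupport.intro ((isCompact_closedBall 0 (2 * T)).prod
      (isCompact_closedBall (0 : E) (2 * r))) fun z hz => ?_
    simp only [mem_prod, not_and_or, mem_closedBall, not_le] at hz
    rcases hz with h | h
    · simp only [G, ψ.zero_of_le_dist h.le, zero_smul]
    · simp only [G, w, χ.zero_of_le_dist h.le, zero_smul, smul_zero]
  obtain ⟨K, hK⟩ := hG.lipschitzWith_of_hasCompactSupport hGsupp one_ne_zero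
  obtain ⟨L, hL⟩ := hGsupp.exists_bound_of_continuous hG.continuous
  have hw_per : Function.Periodic w T := fun t => by simp only [w, hper t]
  have hw : ∀ t, ∃ t', w t = fun x => G (t', x) := fun t => by
    obtain ⟨t', ht', hwt⟩ := hw_per.exists_mem_Ico₀ hT t
    refine ⟨t', hwt.trans (funext fun x => ?_)⟩
    have hψ : ψ t' = 1 := ψ.one_of_mem_closedBall <| by
      simpa [abs_of_nonneg ht'.1] using ht'.2.le
    simp only [G, hψ, one_smul]
  refine ⟨w, K, L.toNNReal, fun t => ?_, fun x => ?_, fun t x => ?_, hw_per, fun t x hx => ?_⟩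
  · obtain ⟨t', ht'⟩ := hw t
    simpa [ht', Function.comp_def] using hK.comp (LipschitzWith.prodMk_left t')
  · exact continuous_const.smul (hv.continuous.comp (by fun_prop : Continuous fun t => (t, x)))
  · obtain ⟨t', ht'⟩ := hw t
    rw [ht']
    exact (hL _).trans (Real.le_coe_toNNReal L)
  · simp only [w, χ.one_of_mem_closedBall hx, one_smul]

end IntegralCurves

section Wazewski

open Filter
open scoped Topology

variable {X : Type*}

/-- The first time at which the trajectory `φ x`, started at time `0`, leaves `W`, capped at the
horizon `T`. -/
noncomputable def exitTime (φ : X → ℝ → X) (W : Set X) (T : ℝ) (x : X) : ℝ :=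
  sSup {t ∈ Icc 0 T | ∀ s ∈ Icc 0 t, φ x s ∈ W}

variable {φ : X → ℝ → X} {W Wm : Set X} {T : ℝ} {x : X}

theorem le_exitTime {t : ℝ} (ht : t ∈ Icc 0 T) (hstay : ∀ s ∈ Icc 0 t, φ x s ∈ W) :
    t ≤ exitTime φ W T x :=
  le_csSup ⟨T, fun _ hs => hs.1.2⟩ ⟨ht, hstay⟩

theorem exitTime_mem_Icc (hT : 0 ≤ T) (hx : φ x 0 ∈ W) : exitTime φ W T x ∈ Icc 0 T := by
  have hzero : ∀ s ∈ Icc (0 : ℝ) 0, φ x s ∈ W := fun s hs => by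
    rwa [le_antisymm hs.2 hs.1]
  exact ⟨le_exitTime ⟨le_rfl, hT⟩ hzero, csSup_le ⟨0, ⟨le_rfl, hT⟩, hzero⟩ fun t ht => ht.1.2⟩

variable [TopologicalSpace X]

theorem mem_of_mem_Icc_exitTime (hW : IsClosed W) (hφ : Continuous (φ x)) (hT : 0 ≤ T)
    (hx : φ x 0 ∈ W) {s : ℝ} (hs : s ∈ Icc 0 (exitTime φ W T x)) : φ x s ∈ W := by
  have hlt : Ico 0 (exitTime φ W T x) ⊆ φ x ⁻¹' W := fun u hu => by
    have hzero : (0 : ℝ) ∈ {t ∈ Icc 0 T | ∀ s ∈ Icc 0 t, φ x s ∈ W} :=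
      ⟨⟨le_rfl, hT⟩, fun s hs => by rwa [le_antisymm hs.2 hs.1]⟩
    obtain ⟨t, ht, hut⟩ := exists_lt_of_lt_csSup ⟨0, hzero⟩ hu.2
    exact ht.2 u ⟨hu.1, hut.le⟩
  rcases (exitTime_mem_Icc hT hx).1.eq_or_lt with h | h
  · rwa [le_antisymm (h ▸ hs.2) hs.1]
  · exact closure_minimal hlt (hW.preimage hφ) (by rwa [closure_Ico h.ne])

/-- `W` is a closed block for the trajectories `φ x` and `Wm` its closed exit set: a trajectory
leaves `W` immediately after any time at which it is in `Wm`, and stays in `W` for a while after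
any time at which it is in `W \ Wm`. -/
structure IsWazewskiPair (φ : X → ℝ → X) (W Wm : Set X) : Prop where
  isClosed : IsClosed W
  isClosed_exit : IsClosed Wm
  frequently_notMem : ∀ x t, φ x t ∈ Wm → ∃ᶠ s in 𝓝[>] t, φ x s ∉ W
  eventually_mem : ∀ x t, φ x t ∈ W → φ x t ∉ Wm → ∀ᶠ s in 𝓝[>] t, φ x s ∈ W

namespace IsWazewskiPair

theorem notMem_exit_of_lt_exitTime (hWWm : IsWazewskiPair φ W Wm) (hT : 0 ≤ T)
    (hx : φ x 0 ∈ W) (hφ : Continuous (φ x)) {s : ℝ} (hs₀ : 0 ≤ s)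
    (hs : s < exitTime φ W T x) : φ x s ∉ Wm := fun hm => by
  obtain ⟨u, huW, hu⟩ :=
    ((hWWm.frequently_notMem x s hm).and_eventually (Ioo_mem_nhdsGT hs)).exists
  exact huW (mem_of_mem_Icc_exitTime hWWm.isClosed hφ hT hx ⟨hs₀.trans hu.1.le, hu.2.le⟩)

theorem exitTime_eq_zero (hWWm : IsWazewskiPair φ W Wm) (hT : 0 ≤ T) (hx : φ x 0 ∈ W)
    (hφ : Continuous (φ x)) (hm : φ x 0 ∈ Wm) : exitTime φ W T x = 0 :=
  (exitTime_mem_Icc hT hx).1.eq_of_not_lt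
    (fun h => hWWm.notMem_exit_of_lt_exitTime hT hx hφ le_rfl h hm) |>.symm

theorem mem_exit_of_exitTime_lt (hWWm : IsWazewskiPair φ W Wm) (hT : 0 ≤ T)
    (hx : φ x 0 ∈ W) (hφ : Continuous (φ x)) (hlt : exitTime φ W T x < T) :
    φ x (exitTime φ W T x) ∈ Wm := by
  by_contra hm
  obtain ⟨h₀, -⟩ := exitTime_mem_Icc hT hx
  have hbefore := fun s => mem_of_mem_Icc_exitTime hWWm.isClosed hφ hT hx (s := s)
  obtain ⟨u, hu, hafter⟩ := (mem_nhdsGT_iff_exists_Ioc_subset).1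
    ((hWWm.eventually_mem x _ (hbefore _ ⟨h₀, le_rfl⟩) hm).and (Ioo_mem_nhdsGT hlt))
  have huT : u < T := (hafter ⟨hu, le_rfl⟩).2.2
  refine not_le.2 hu (le_exitTime ⟨h₀.trans hu.le, huT.le⟩ fun s hs => ?_)
  rcases le_or_gt s (exitTime φ W T x) with h | h
  · exact hbefore s ⟨hs.1, h⟩
  · exact (hafter ⟨h, hs.2⟩).1

theorem continuousOn_exitTime (hWWm : IsWazewskiPair φ W Wm) (hT : 0 ≤ T)
    (hφ : Continuous (Function.uncurry φ)) :
    ContinuousOn (exitTime φ W T) {x | φ x 0 ∈ W} := by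
  have hφ' : ∀ x, Continuous (φ x) := fun x => hφ.comp (Continuous.prodMk_right x)
  refine fun x hx => tendsto_order.2 ⟨fun c hc => ?_, fun c hc => ?_⟩
  · have hmiss : ∀ᶠ y in 𝓝 x, ∀ s ∈ Icc 0 c, φ y s ∉ Wm :=
      isCompact_Icc.eventually_forall_of_forall_eventually fun s hs =>
        (hWWm.isClosed_exit.preimage hφ).isOpen_compl.mem_nhds
          (hWWm.notMem_exit_of_lt_exitTime hT hx (hφ' x) hs.1 (hs.2.trans_lt hc))
    filter_upwards [self_mem_nhdsWithin, mem_nhdsWithin_of_mem_nhds hmiss] with y hy hyc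
    by_contra! hcon
    exact hyc _ ⟨(exitTime_mem_Icc hT hy).1, hcon⟩ (hWWm.mem_exit_of_exitTime_lt hT hy (hφ' y)
      (hcon.trans_lt (hc.trans_le (exitTime_mem_Icc hT hx).2)))
  · rcases (exitTime_mem_Icc hT hx).2.eq_or_lt with h | h
    · filter_upwards [self_mem_nhdsWithin] with y hy
      exact ((exitTime_mem_Icc hT hy).2.trans h.ge).trans_lt hc
    · obtain ⟨s, hsW, hs⟩ := ((hWWm.frequently_notMem x _ (hWWm.mem_exit_of_exitTime_lt hT hx
        (hφ' x) h)).and_eventually (Ioo_mem_nhdsGT hc)).exists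
      have hout : ∀ᶠ y in 𝓝 x, φ y s ∉ W :=
        (hWWm.isClosed.preimage (hφ.comp (Continuous.prodMk_left s))).isOpen_compl.mem_nhds hsW
      filter_upwards [self_mem_nhdsWithin, mem_nhdsWithin_of_mem_nhds hout] with y hy hys
      by_contra! hcon
      exact hys (mem_of_mem_Icc_exitTime hWWm.isClosed (hφ' y) hT hy
        ⟨(exitTime_mem_Icc hT hx).1.trans hs.1.le, hs.2.le.trans hcon⟩)

end IsWazewskiPair

variable {E : Type*} [NormedAddCommGroup E] [NormedSpace ℝ E] [FiniteDimensional ℝ E]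

/- The map `x ↦ H (1 - τ x / T) (φ x (τ x))`, with `τ` the exit time, is a continuous self-map of
`W`. At a fixed point with `τ x < T` the homotopy brings `x` back into the exit set, where `τ`
vanishes, so `x` would be a fixed point of `H 1`. -/
theorem IsWazewskiPair.exists_apply_eq_self {φ : E → ℝ → E} {W Wm : Set E} {T : ℝ}
    (hWWm : IsWazewskiPair φ W Wm) (hφ₀ : ∀ x, φ x 0 = x) (hφ : Continuous (Function.uncurry φ))
    (hT : 0 < T) (hconv : Convex ℝ W) (hcomp : IsCompact W) (hint : (interior W).Nonempty)
    {H : ℝ → E → E} (hH : Continuous (Function.uncurry H))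
    (hHW : ∀ θ, MapsTo (H θ) W W) (hHWm : ∀ θ, MapsTo (H θ) Wm Wm) (hH₀ : ∀ x, H 0 x = x)
    (hH₁ : ∀ x ∈ Wm, H 1 x ≠ x) :
    ∃ x ∈ W, φ x T = x ∧ ∀ s ∈ Icc 0 T, φ x s ∈ W := by
  have hφ' : ∀ x, Continuous (φ x) := fun x => hφ.comp (Continuous.prodMk_right x)
  have hstart : ∀ {x}, x ∈ W → φ x 0 ∈ W := fun {x} hx => (hφ₀ x).symm ▸ hx
  let τ := exitTime φ W T
  have hτ : ContinuousOn τ W := by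
    simpa only [hφ₀] using! hWWm.continuousOn_exitTime hT.le hφ
  have hτ_mem : ∀ x ∈ W, τ x ∈ Icc 0 T := fun x hx => exitTime_mem_Icc hT.le (hstart hx)
  have hstay : ∀ x ∈ W, ∀ s ∈ Icc 0 (τ x), φ x s ∈ W := fun x hx s hs =>
    mem_of_mem_Icc_exitTime hWWm.isClosed (hφ' x) hT.le (hstart hx) hs
  obtain ⟨x, hxW, hx⟩ := brouwer_convex hconv hcomp hint
    (f := fun x => H (1 - τ x / T) (φ x (τ x)))
    (hH.comp_continuousOn ((continuousOn_const.sub (hτ.div_const T)).prodMk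
      (hφ.comp_continuousOn (continuousOn_id.prodMk hτ))))
    (fun x hx => hHW _ (hstay x hx _ ⟨(hτ_mem x hx).1, le_rfl⟩))
  have hτx : τ x = T := by
    by_contra hne
    have hm := hWWm.mem_exit_of_exitTime_lt hT.le (hstart hxW) (hφ' x)
      (lt_of_le_of_ne (hτ_mem x hxW).2 hne)
    have hxm : x ∈ Wm := hx ▸ hHWm _ hm
    have hτ₀ : τ x = 0 := hWWm.exitTime_eq_zero hT.le (hstart hxW) (hφ' x) ((hφ₀ x).symm ▸ hxm)
    simp only [hτ₀, hφ₀, zero_div, sub_zero] at hx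
    exact hH₁ x hxm hx
  simp only [hτx, div_self hT.ne', sub_self, hH₀] at hx
  exact ⟨x, hxW, hx, fun s hs => hstay x hxW s (hτx ▸ hs)⟩

end Wazewski

section SecondOrderInequality

open Filter
open scoped Topology

theorem hasDerivAt_max_zero_sq (x : ℝ) : HasDerivAt (fun y : ℝ => max y 0 ^ 2) (2 * max x 0) x := by
  rcases lt_trichotomy x 0 with hx | rfl | hx
  · rw [max_eq_right hx.le, mul_zero]
    refine (hasDerivAt_const x (0 : ℝ)).congr_of_eventuallyEq ?_
    filter_upwards [eventually_lt_nhds hx] with y hy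
    simp [max_eq_right hy.le]
  · refine hasDerivAt_iff_isLittleO_nhds_zero.2 ?_
    have hsq : (fun y : ℝ => y ^ 2) =o[𝓝 0] fun y => y := by
      simpa using Asymptotics.isLittleO_pow_pow (𝕜 := ℝ) one_lt_two
    refine (Asymptotics.isBigO_of_le _ fun y => ?_).trans_isLittleO hsq
    simp only [zero_add, max_self, ne_eq, OfNat.ofNat_ne_zero, not_false_eq_true, zero_pow,
      mul_zero, smul_zero, sub_zero, norm_pow, Real.norm_eq_abs]
    exact pow_le_pow_left₀ (abs_nonneg _)
      (by simpa using abs_max_le_max_abs_abs (a := y) (b := 0)) 2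
  · rw [max_eq_left hx.le]
    refine (by simpa using hasDerivAt_pow 2 x : HasDerivAt (fun y : ℝ => y ^ 2) (2 * x) x)
      |>.congr_of_eventuallyEq ?_
    filter_upwards [eventually_gt_nhds hx] with y hy
    rw [max_eq_left hy.le]

theorem eq_zero_of_deriv_le_mul_self {z z' : ℝ → ℝ} {a b K : ℝ}
    (hz : ∀ s ∈ Ico a b, HasDerivAt z (z' s) s) (ha : z a = 0) (hnonneg : ∀ s ∈ Ico a b, 0 ≤ z s)
    (hle : ∀ s ∈ Ico a b, z' s ≤ K * z s) : ∀ s ∈ Ico a b, z s = 0 := fun s hs => by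
  have hsub : Icc a s ⊆ Ico a b := Icc_subset_Ico_right hs.2
  have hbound := le_gronwallBound_of_liminf_deriv_right_le (δ := 0) (K := K) (ε := 0)
    (HasDerivAt.continuousOn fun u hu => hz u (hsub hu))
    (fun u hu _ hr =>
      (hz u (hsub (Ico_subset_Icc_self hu))).hasDerivWithinAt.liminf_right_slope_le hr)
    ha.le (fun u hu => by simpa using hle u (hsub (Ico_subset_Icc_self hu))) s ⟨hs.1, le_rfl⟩
  exact le_antisymm (by simpa [gronwallBound_ε0_δ0] using hbound) (hnonneg s hs)

/- Grönwall's inequality for the energy `h ^ 2 + (max h' 0) ^ 2`. -/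
theorem eq_zero_of_deriv_deriv_le {h h' h'' : ℝ → ℝ} {a b C : ℝ} (hC : 0 ≤ C)
    (hh : ∀ s ∈ Ico a b, HasDerivAt h (h' s) s) (hh' : ∀ s ∈ Ico a b, HasDerivAt h' (h'' s) s)
    (ha : h a = 0) (ha' : h' a = 0) (hnonneg : ∀ s ∈ Ioo a b, 0 ≤ h s)
    (hle : ∀ s ∈ Ioo a b, h'' s ≤ C * (h s + |h' s|)) : ∀ s ∈ Ico a b, h s = 0 := by
  have henergy := eq_zero_of_deriv_le_mul_self (a := a) (b := b) (K := 1 + 3 * C)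
    (z := fun s => h s ^ 2 + max (h' s) 0 ^ 2)
    (z' := fun s => 2 * h s * h' s + 2 * max (h' s) 0 * h'' s)
    (fun s hs => by
      simpa using! ((hh s hs).pow 2).add ((hasDerivAt_max_zero_sq _).comp s (hh' s hs)))
    (by simp [ha, ha']) (fun s _ => by positivity) (fun s hs => ?_)
  · intro s hs
    exact pow_eq_zero_iff two_ne_zero |>.1
      ((add_eq_zero_iff_of_nonneg (sq_nonneg _) (sq_nonneg _)).1 (henergy s hs)).1
  · rcases hs.1.eq_or_lt with rfl | has
    · simp [ha, ha']
    have hs' : s ∈ Ioo a b := ⟨has, hs.2⟩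
    have h₀ := hnonneg s hs'
    rcases le_total (h' s) 0 with hneg | hpos
    · rw [max_eq_right hneg]
      nlinarith [mul_nonneg h₀ (neg_nonneg.2 hneg), mul_nonneg hC (sq_nonneg (h s)),
        sq_nonneg (h s)]
    · have hle' := hle s hs'
      rw [abs_of_nonneg hpos] at hle'
      rw [max_eq_left hpos]
      calc 2 * h s * h' s + 2 * h' s * h'' s
          ≤ 2 * h s * h' s + 2 * h' s * (C * (h s + h' s)) := by gcongr
        _ = (1 + C) * (2 * h s * h' s) + 2 * C * h' s ^ 2 := by ring
        _ ≤ (1 + C) * (h s ^ 2 + h' s ^ 2) + 2 * C * (h s ^ 2 + h' s ^ 2) := by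
            gcongr
            · exact two_mul_le_add_sq _ _
            · exact le_add_of_nonneg_left (sq_nonneg _)
        _ = (1 + 3 * C) * (h s ^ 2 + h' s ^ 2) := by ring

end SecondOrderInequality

section Motions

open Filter
open scoped Topology

variable {ι V : Type*} [NormedAddCommGroup V] [InnerProductSpace ℝ V]
  {A : ι → ℝ → (ι → V) → (ι → V) → V} {R : ι → ℝ} {q p : ℝ → ι → V} {I : Set ℝ} {t : ℝ}

/-- The positions `q` and velocities `p` of a motion of the system `q̈ᵢ = Aᵢ(t, q, q̇)` during the
set of times `I`, the system being written as `q̇ = p`, `ṗ = A(t, q, p)`. -/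
def IsMotion (A : ι → ℝ → (ι → V) → (ι → V) → V) (q p : ℝ → ι → V) (I : Set ℝ) : Prop :=
  ∀ t ∈ I, ∀ i, HasDerivAt (fun s => q s i) (p t i) t ∧
    HasDerivAt (fun s => p s i) (A i t (q t) (p t)) t

/-- Motions that touch the boundary of the product of balls `∏ᵢ closedBall 0 (R i)` tangentially
to all the spheres they lie on leave this product immediately. -/
def TangentMotionsLeave (A : ι → ℝ → (ι → V) → (ι → V) → V) (R : ι → ℝ) : Prop :=
  ∀ t₀ : ℝ, ∀ q₀ p₀ : ι → V, (∀ j, ‖q₀ j‖ ≤ R j) → (∃ i, ‖q₀ i‖ = R i) →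
    (∀ i, ‖q₀ i‖ = R i → ⟪q₀ i, p₀ i⟫ = 0) →
    ∀ (I : Set ℝ) (q p : ℝ → ι → V), IsOpen I → t₀ ∈ I → IsMotion A q p I →
      q t₀ = q₀ → p t₀ = p₀ →
      ∃ ε > (0 : ℝ), ∀ t ∈ Ioo t₀ (t₀ + ε), t ∈ I → ∃ j, R j < ‖q t j‖

/-- Half the second derivative of `‖qⱼ‖²` along the motions of `q̈ = A(t, q, q̇)`, as a function of
time and state; see `IsMotion.hasDerivAt_inner`. -/
def radialAcceleration (A : ι → ℝ → (ι → V) → (ι → V) → V) (j : ι)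
    (u : ℝ × (ι → V) × (ι → V)) : ℝ :=
  ‖u.2.2 j‖ ^ 2 + ⟪u.2.1 j, A j u.1 u.2.1 u.2.2⟫

theorem contDiff_radialAcceleration [Fintype ι] {j : ι} {n : WithTop ℕ∞}
    (hA : ContDiff ℝ n fun u : ℝ × (ι → V) × (ι → V) => A j u.1 u.2.1 u.2.2) :
    ContDiff ℝ n (radialAcceleration A j) := by
  have hq : ContDiff ℝ n fun u : ℝ × (ι → V) × (ι → V) => u.2.1 j := by fun_prop
  have hp : ContDiff ℝ n fun u : ℝ × (ι → V) × (ι → V) => u.2.2 j := by fun_prop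
  exact (hp.norm_sq ℝ).add (hq.inner ℝ hA)

theorem IsMotion.hasDerivAt_norm_sq (h : IsMotion A q p I) (ht : t ∈ I) (i : ι) :
    HasDerivAt (fun s => ‖q s i‖ ^ 2) (2 * ⟪q t i, p t i⟫) t :=
  (h t ht i).1.norm_sq

theorem IsMotion.hasDerivAt_inner (h : IsMotion A q p I) (ht : t ∈ I) (i : ι) :
    HasDerivAt (fun s => ⟪q s i, p s i⟫) (radialAcceleration A i (t, q t, p t)) t := by
  have hinner := (h t ht i).1.inner ℝ (h t ht i).2
  rwa [real_inner_self_eq_norm_sq, add_comm] at hinner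

theorem IsMotion.continuousAt (h : IsMotion A q p I) (ht : t ∈ I) :
    ContinuousAt (fun s => (q s, p s)) t :=
  (continuousAt_pi.2 fun i => (h t ht i).1.continuousAt).prodMk
    (continuousAt_pi.2 fun i => (h t ht i).2.continuousAt)

theorem isMotion_of_hasDerivAt [Finite ι] {γ : ℝ → (ι → V) × (ι → V)}
    (hγ : ∀ t ∈ I, HasDerivAt γ ((γ t).2, fun i => A i t (γ t).1 (γ t).2) t) :
    IsMotion A (fun s => (γ s).1) (fun s => (γ s).2) I := fun t ht i => by
  have := Fintype.ofFinite ι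
  have hderiv : HasDerivAt γ _ t := hγ t ht
  exact ⟨hasDerivAt_pi.1 hderiv.fst i, hasDerivAt_pi.1 hderiv.snd i⟩

theorem contDiff_phaseField [Fintype ι] {n : WithTop ℕ∞}
    (hA : ∀ i, ContDiff ℝ n fun u : ℝ × (ι → V) × (ι → V) => A i u.1 u.2.1 u.2.2) :
    ContDiff ℝ n fun u : ℝ × (ι → V) × (ι → V) => (u.2.2, fun i => A i u.1 u.2.1 u.2.2) :=
  contDiff_snd.snd.prodMk (contDiff_pi.2 hA)

theorem exists_isMotion [Fintype ι] [CompleteSpace V]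
    (hA : ∀ i, ContDiff ℝ 1 fun u : ℝ × (ι → V) × (ι → V) => A i u.1 u.2.1 u.2.2)
    (t₀ : ℝ) (q₀ p₀ : ι → V) :
    ∃ I q p, IsOpen I ∧ t₀ ∈ I ∧ IsMotion A q p I ∧ q t₀ = q₀ ∧ p t₀ = p₀ := by
  obtain ⟨γ, hγ₀, hγ⟩ := exists_isIntegralCurveAt_of_contDiff
    (v := fun t z => (z.2, fun i => A i t z.1 z.2)) (contDiff_phaseField hA) t₀ (q₀, p₀)
  obtain ⟨I, hγI, hI, ht₀⟩ := eventually_nhds_iff.1 hγ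
  exact ⟨I, fun s => (γ s).1, fun s => (γ s).2, hI, ht₀, isMotion_of_hasDerivAt hγI,
    congrArg Prod.fst hγ₀, congrArg Prod.snd hγ₀⟩

theorem TangentMotionsLeave.eventually_exists_lt_norm (hex : TangentMotionsLeave A R)
    (hI : IsOpen I) (h : IsMotion A q p I) (ht : t ∈ I) (hle : ∀ i, ‖q t i‖ ≤ R i)
    (hbd : ∃ i, ‖q t i‖ = R i) (htan : ∀ i, ‖q t i‖ = R i → ⟪q t i, p t i⟫ = 0) :
    ∀ᶠ s in 𝓝[>] t, ∃ j, R j < ‖q s j‖ := by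
  obtain ⟨ε, hε, hout⟩ := hex t (q t) (p t) hle hbd htan I q p hI ht h rfl rfl
  filter_upwards [Ioo_mem_nhdsGT (lt_add_of_pos_right t hε),
    mem_nhdsWithin_of_mem_nhds (hI.mem_nhds ht)] with s hs hsI using hout s hs hsI

theorem TangentMotionsLeave.norm_lt_of_eventually_le (hex : TangentMotionsLeave A R)
    (hI : IsOpen I) (h : IsMotion A q p I) (ht : t ∈ I)
    (hle : ∀ᶠ s in 𝓝 t, ∀ i, ‖q s i‖ ≤ R i) (i : ι) : ‖q t i‖ < R i := by
  refine (hle.self_of_nhds i).lt_of_ne fun hi => ?_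
  have htan : ∀ j, ‖q t j‖ = R j → ⟪q t j, p t j⟫ = 0 := fun j hj => by
    have hmax : IsLocalMax (fun s => ‖q s j‖ ^ 2) t := by
      filter_upwards [hle] with s hs
      rw [hj]
      exact pow_le_pow_left₀ (norm_nonneg _) (hs j) 2
    simpa using hmax.hasDerivAt_eq_zero (h.hasDerivAt_norm_sq ht j)
  obtain ⟨s, ⟨j, hj⟩, hs⟩ := ((hex.eventually_exists_lt_norm hI h ht hle.self_of_nhds ⟨i, hi⟩
    htan).and (hle.filter_mono nhdsWithin_le_nhds)).exists
  exact (hs j).not_gt hj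

/- If it were negative, `‖qⱼ‖²` would have a strict local maximum, so that the motion would stay in
the product of balls. -/
theorem TangentMotionsLeave.radialAcceleration_nonneg [Fintype ι] [CompleteSpace V]
    (hex : TangentMotionsLeave A R)
    (hA : ∀ i, ContDiff ℝ 1 fun u : ℝ × (ι → V) × (ι → V) => A i u.1 u.2.1 u.2.2)
    {z : (ι → V) × (ι → V)} {j : ι} (hj : ‖z.1 j‖ = R j) (hjtan : ⟪z.1 j, z.2 j⟫ = 0)
    (hlt : ∀ i ≠ j, ‖z.1 i‖ < R i) (t : ℝ) : 0 ≤ radialAcceleration A j (t, z) := by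
  obtain ⟨q₀, p₀⟩ := z
  obtain ⟨I, q, p, hI, ht, h, rfl, rfl⟩ := exists_isMotion hA t q₀ p₀
  by_contra! hneg
  have hmax : IsLocalMax (fun s => ‖q s j‖ ^ 2) t := by
    have hderiv : deriv (fun s => ‖q s j‖ ^ 2) =ᶠ[𝓝 t] fun s => 2 * ⟪q s j, p s j⟫ := by
      filter_upwards [hI.mem_nhds ht] with s hs using (h.hasDerivAt_norm_sq hs j).deriv
    refine isLocalMax_of_deriv_deriv_neg ?_ ?_ (h.hasDerivAt_norm_sq ht j).continuousAt
    · rw [hderiv.deriv_eq, ((h.hasDerivAt_inner ht j).const_mul 2).deriv]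
      linarith
    · simpa [hderiv.self_of_nhds] using hjtan
  have hle : ∀ᶠ s in 𝓝 t, ∀ i, ‖q s i‖ ≤ R i := eventually_all.2 fun i => by
    by_cases hi : i = j
    · filter_upwards [hmax] with s hs
      rw [hi, ← hj]
      exact (pow_le_pow_iff_left₀ (norm_nonneg _) (norm_nonneg _) two_ne_zero).1 hs
    · exact ((h t ht i).1.continuousAt.norm.eventually_lt continuousAt_const (hlt i hi)).mono
        fun _ => le_of_lt
  exact (hex.norm_lt_of_eventually_le hI h ht hle j).ne hj

end Motions

section TangentProjection

variable {ι V : Type*} [NormedAddCommGroup V] [InnerProductSpace ℝ V] [DecidableEq ι]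

theorem dist_update_self {X : ι → Type*} [Fintype ι] [∀ i, PseudoMetricSpace (X i)]
    (f : ∀ i, X i) (j : ι) (x : X j) : dist (Function.update f j x) f = dist x (f j) := by
  refine le_antisymm ((dist_pi_le_iff dist_nonneg).2 fun i => ?_) ?_
  · rcases eq_or_ne i j with rfl | hi
    · rw [Function.update_self]
    · rw [Function.update_of_ne hi, dist_self]
      exact dist_nonneg
  · simpa using dist_le_pi_dist (Function.update f j x) f j

/-- The state obtained by moving the `j`-th particle radially to the sphere of radius `r` and
removing the radial component of its velocity. -/
noncomputable def tangentProjection (r : ℝ) (j : ι) (z : (ι → V) × (ι → V)) :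
    (ι → V) × (ι → V) :=
  (Function.update z.1 j ((r / ‖z.1 j‖) • z.1 j),
    Function.update z.2 j (z.2 j - (⟪z.1 j, z.2 j⟫ / ‖z.1 j‖ ^ 2) • z.1 j))

variable {r : ℝ} {j : ι} {z : (ι → V) × (ι → V)}

theorem norm_tangentProjection (hr : 0 ≤ r) (hz : z.1 j ≠ 0) :
    ‖(tangentProjection r j z).1 j‖ = r := by
  simp only [tangentProjection, Function.update_self]
  rw [norm_smul, norm_div, norm_norm, Real.norm_of_nonneg hr,
    div_mul_cancel₀ _ (norm_ne_zero_iff.2 hz)]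

theorem inner_tangentProjection (hz : z.1 j ≠ 0) :
    ⟪(tangentProjection r j z).1 j, (tangentProjection r j z).2 j⟫ = 0 := by
  simp only [tangentProjection, Function.update_self]
  rw [real_inner_smul_left, inner_sub_right, real_inner_smul_right, real_inner_self_eq_norm_sq,
    div_mul_cancel₀ _ (pow_ne_zero 2 (norm_ne_zero_iff.2 hz)), sub_self, mul_zero]

theorem tangentProjection_eq_self (hr : r ≠ 0) (hz : ‖z.1 j‖ = r) (htan : ⟪z.1 j, z.2 j⟫ = 0) :
    tangentProjection r j z = z := by
  simp only [tangentProjection, htan, hz, div_self hr, one_smul, zero_div, zero_smul, sub_zero,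
    Function.update_eq_self, Prod.mk.eta]

theorem continuousAt_tangentProjection (hz : z.1 j ≠ 0) :
    ContinuousAt (tangentProjection r j) z := by
  have hq : ContinuousAt (fun z : (ι → V) × (ι → V) => z.1 j) z := by fun_prop
  have hp : ContinuousAt (fun z : (ι → V) × (ι → V) => z.2 j) z := by fun_prop
  have hz' : ‖z.1 j‖ ≠ 0 := norm_ne_zero_iff.2 hz
  exact (continuousAt_fst.update j ((continuousAt_const.div hq.norm hz').smul hq)).prodMk
    (continuousAt_snd.update j (hp.sub
      (((hq.inner hp).div (hq.norm.pow 2) (pow_ne_zero 2 hz')).smul hq)))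

theorem dist_tangentProjection_le [Fintype ι] (hr : 0 < r) (hrz : r / 2 ≤ ‖z.1 j‖)
    (hzr : ‖z.1 j‖ ≤ r) :
    dist (tangentProjection r j z) z ≤ (r ^ 2 - ‖z.1 j‖ ^ 2 + |2 * ⟪z.1 j, z.2 j⟫|) / r := by
  have hz : 0 < ‖z.1 j‖ := (half_pos hr).trans_le hrz
  rw [Prod.dist_eq, tangentProjection, dist_update_self, dist_update_self, le_div_iff₀ hr,
    max_mul_of_nonneg _ _ hr.le]
  refine max_le ?_ ?_
  · calc dist ((r / ‖z.1 j‖) • z.1 j) (z.1 j) * r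
        = (r - ‖z.1 j‖) * r := by
          have hsub : (r / ‖z.1 j‖) • z.1 j - z.1 j = ((r - ‖z.1 j‖) / ‖z.1 j‖) • z.1 j := by
            rw [sub_div, div_self hz.ne', sub_smul, one_smul]
          rw [dist_eq_norm, hsub, norm_smul, norm_div, norm_norm, div_mul_cancel₀ _ hz.ne',
            Real.norm_of_nonneg (sub_nonneg.2 hzr)]
      _ ≤ r ^ 2 - ‖z.1 j‖ ^ 2 := by nlinarith
      _ ≤ _ := le_add_of_nonneg_right (abs_nonneg _)
  · calc dist (z.2 j - (⟪z.1 j, z.2 j⟫ / ‖z.1 j‖ ^ 2) • z.1 j) (z.2 j) * r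
        = |⟪z.1 j, z.2 j⟫| / ‖z.1 j‖ * r := by
          rw [dist_eq_norm, sub_sub_cancel_left, norm_neg, norm_smul, norm_div, norm_pow, norm_norm,
            Real.norm_eq_abs, sq, ← div_div, div_mul_cancel₀ _ hz.ne']
      _ ≤ |2 * ⟪z.1 j, z.2 j⟫| := by
          rw [div_mul_eq_mul_div, div_le_iff₀ hz, abs_mul, abs_two]
          nlinarith [abs_nonneg ⟪z.1 j, z.2 j⟫]
      _ ≤ _ := le_add_of_nonneg_left (by nlinarith)

end TangentProjection

section BoundaryBehaviour

open Filter
open scoped Topology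

variable {ι V : Type*} [NormedAddCommGroup V] [InnerProductSpace ℝ V]
  {A : ι → ℝ → (ι → V) → (ι → V) → V} {R : ι → ℝ} {q p : ℝ → ι → V} {I : Set ℝ} {t : ℝ}

theorem eventually_nhdsGT_lt_of_deriv_neg {f : ℝ → ℝ} {f' : ℝ} (hf : HasDerivAt f f' t)
    (hf' : f' < 0) : ∀ᶠ s in 𝓝[>] t, f s < f t := by
  filter_upwards [hf.hasDerivWithinAt.limsup_slope_le' (lt_irrefl t) hf', self_mem_nhdsWithin]
    with s hs hts
  rw [slope_def_field] at hs
  exact sub_neg.1 (neg_of_div_neg_left hs (sub_nonneg.2 (le_of_lt hts)))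

theorem eventually_nhdsGT_norm_le {g : ℝ → V} {g' : V} {r : ℝ} (hg : HasDerivAt g g' t)
    (hle : ‖g t‖ ≤ r) (hin : ‖g t‖ = r → ⟪g t, g'⟫ < 0) : ∀ᶠ s in 𝓝[>] t, ‖g s‖ ≤ r := by
  rcases hle.eq_or_lt with heq | hlt
  · filter_upwards [eventually_nhdsGT_lt_of_deriv_neg hg.norm_sq (by linarith [hin heq])] with s hs
    exact heq ▸ (lt_of_pow_lt_pow_left₀ 2 (norm_nonneg _) hs).le
  · exact ((hg.continuousAt.norm.eventually_lt continuousAt_const hlt).filter_mono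
      nhdsWithin_le_nhds).mono fun _ => le_of_lt

theorem frequently_nhdsGT_lt_norm {g : ℝ → V} {g' : V} (hg : HasDerivAt g g' t)
    (hout : 0 < ⟪g t, g'⟫) : ∃ᶠ s in 𝓝[>] t, ‖g t‖ < ‖g s‖ := by
  refine Eventually.frequently ?_
  filter_upwards [eventually_nhdsGT_lt_of_deriv_neg hg.norm_sq.neg (by linarith)] with s hs
  exact lt_of_pow_lt_pow_left₀ 2 (norm_nonneg _) (neg_lt_neg_iff.1 hs)

/- The radial acceleration is nonnegative at the tangential projection and locally Lipschitz. -/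
theorem TangentMotionsLeave.exists_le_radialAcceleration [Fintype ι] [CompleteSpace V]
    (hex : TangentMotionsLeave A R) {j : ι} (hRj : 0 < R j)
    (hA : ∀ i, ContDiff ℝ 1 fun u : ℝ × (ι → V) × (ι → V) => A i u.1 u.2.1 u.2.2)
    {z : (ι → V) × (ι → V)} (hz : ‖z.1 j‖ = R j) (htan : ⟪z.1 j, z.2 j⟫ = 0) (t : ℝ) :
    ∃ C, 0 ≤ C ∧ ∀ᶠ u in 𝓝 (t, z), (∀ i, ‖u.2.1 i‖ < R i) →
      -(C * (R j ^ 2 - ‖u.2.1 j‖ ^ 2 + |2 * ⟪u.2.1 j, u.2.2 j⟫|)) ≤ radialAcceleration A j u := by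
  classical
  obtain ⟨K, N, hN, hK⟩ :=
    (contDiff_radialAcceleration (hA j)).contDiffAt.exists_lipschitzOnWith (x := (t, z))
  have hz₀ : z.1 j ≠ 0 := norm_ne_zero_iff.1 (hz ▸ hRj.ne')
  have hproj : Tendsto (fun u : ℝ × (ι → V) × (ι → V) => (u.1, tangentProjection (R j) j u.2))
      (𝓝 (t, z)) (𝓝 (t, z)) := by
    have hcont := continuousAt_fst.prodMk
      (ContinuousAt.comp (x := (t, z)) (continuousAt_tangentProjection (r := R j) hz₀)
        continuousAt_snd)
    simpa [ContinuousAt, Function.comp_def, tangentProjection_eq_self hRj.ne' hz htan] using hcont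
  have hhalf : ∀ᶠ u in 𝓝 (t, z), R j / 2 < ‖u.2.1 j‖ :=
    continuousAt_const.eventually_lt (by fun_prop) (by simp [hz, hRj])
  refine ⟨K / R j, by positivity, ?_⟩
  filter_upwards [hN, hproj.eventually hN, hhalf] with u hu hπu hhalf hlt
  have hu₀ : u.2.1 j ≠ 0 := norm_pos_iff.1 ((half_pos hRj).trans hhalf)
  have hnonneg : 0 ≤ radialAcceleration A j (u.1, tangentProjection (R j) j u.2) :=
    hex.radialAcceleration_nonneg hA (norm_tangentProjection hRj.le hu₀)
      (inner_tangentProjection hu₀)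
      (fun i hi => by simpa [tangentProjection, hi] using hlt i) u.1
  have hdist : dist (u.1, tangentProjection (R j) j u.2) u ≤
      (R j ^ 2 - ‖u.2.1 j‖ ^ 2 + |2 * ⟪u.2.1 j, u.2.2 j⟫|) / R j := by
    rw [Prod.dist_eq, dist_self, max_eq_right dist_nonneg]
    exact dist_tangentProjection_le hRj hhalf.le (hlt j).le
  have hlip := ((le_abs_self _).trans (hK.dist_le_mul _ hπu _ hu)).trans
    (mul_le_mul_of_nonneg_left hdist K.coe_nonneg)
  rw [div_mul_eq_mul_div, ← mul_div_assoc] at *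
  linarith

/- Otherwise the motion is strictly inside right after time `t`, so that `h = Rⱼ² - ‖qⱼ‖²` is
positive there; but `h` satisfies a second order inequality that forces it to vanish. -/
theorem TangentMotionsLeave.frequently_exists_lt_norm [Fintype ι] [CompleteSpace V]
    (hex : TangentMotionsLeave A R)
    (hA : ∀ i, ContDiff ℝ 1 fun u : ℝ × (ι → V) × (ι → V) => A i u.1 u.2.1 u.2.2)
    (hI : IsOpen I) (h : IsMotion A q p I) (ht : t ∈ I) {j : ι} (hRj : 0 < R j)
    (hj : ‖q t j‖ = R j) (hjp : 0 ≤ ⟪q t j, p t j⟫) : ∃ᶠ s in 𝓝[>] t, ∃ i, R i < ‖q s i‖ := by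
  rcases hjp.lt_or_eq with hpos | htan
  · exact (frequently_nhdsGT_lt_norm (h t ht j).1 hpos).mono fun s hs => ⟨j, hj ▸ hs⟩
  by_contra hcon
  simp only [not_frequently, not_exists, not_lt] at hcon
  obtain ⟨C, hC, hacc⟩ := hex.exists_le_radialAcceleration hRj hA (z := (q t, p t)) hj htan.symm t
  have hstate : ContinuousAt (fun s => (s, q s, p s)) t :=
    continuousAt_id.prodMk (h.continuousAt ht)
  obtain ⟨b, hb, hsub⟩ := mem_nhdsGT_iff_exists_Ioo_subset.1
    (hcon.and (((hI.eventually_mem ht).and (hstate.eventually hacc)).filter_mono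
      nhdsWithin_le_nhds))
  have hIco : ∀ s ∈ Ico t b, s ∈ I := fun s hs =>
    hs.1.eq_or_lt.elim (fun hts => hts ▸ ht) fun hts => (hsub ⟨hts, hs.2⟩).2.1
  have hlt : ∀ s ∈ Ioo t b, ∀ i, ‖q s i‖ < R i := fun s hs =>
    hex.norm_lt_of_eventually_le hI h (hsub hs).2.1 <|
      Filter.mem_of_superset (Ioo_mem_nhds hs.1 hs.2) fun u hu => (hsub hu).1
  have hpos : ∀ s ∈ Ioo t b, 0 < R j ^ 2 - ‖q s j‖ ^ 2 := fun s hs =>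
    sub_pos.2 (pow_lt_pow_left₀ (hlt s hs j) (norm_nonneg _) two_ne_zero)
  obtain ⟨s, hs⟩ := nonempty_Ioo.2 (mem_Ioi.1 hb)
  refine (hpos s hs).ne' (eq_zero_of_deriv_deriv_le (a := t) (b := b) (C := 2 * C)
    (h := fun s => R j ^ 2 - ‖q s j‖ ^ 2) (h' := fun s => -(2 * ⟪q s j, p s j⟫))
    (h'' := fun s => -(2 * radialAcceleration A j (s, q s, p s))) (by positivity)
    (fun s hs => (h.hasDerivAt_norm_sq (hIco s hs) j).const_sub _)
    (fun s hs => ((h.hasDerivAt_inner (hIco s hs) j).const_mul 2).neg)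
    (by simp [hj]) (by simp [← htan]) (fun s hs => (hpos s hs).le) (fun s hs => ?_) s
    (Ioo_subset_Ico_self hs))
  have hle := (hsub hs).2.2 (hlt s hs)
  rw [abs_neg]
  linarith

end BoundaryBehaviour

section EvenDimension

theorem exists_linearIsometryEquiv_homotopy_neg {V : Type*} [NormedAddCommGroup V]
    [InnerProductSpace ℝ V] [FiniteDimensional ℝ V] (heven : Even (Module.finrank ℝ V)) :
    ∃ ρ : ℝ → V ≃ₗᵢ[ℝ] V, (∀ x, ρ 0 x = x) ∧ (∀ x, ρ 1 x = -x) ∧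
      Continuous fun u : ℝ × V => ρ u.1 u.2 := by
  obtain ⟨m, hm⟩ := even_iff_exists_two_mul.1 heven
  have hrank : Module.finrank ℝ (PiLp 2 fun _ : Fin m => ℂ) = Module.finrank ℝ V := by
    rw [(WithLp.linearEquiv 2 ℝ (Fin m → ℂ)).finrank_eq, Module.finrank_pi_fintype]
    simp [hm, mul_comm]
  let e : V ≃ₗᵢ[ℝ] PiLp 2 fun _ : Fin m => ℂ := (stdOrthonormalBasis ℝ V).equiv
    (stdOrthonormalBasis ℝ _) (finCongr hrank.symm)
  let ρ : ℝ → V ≃ₗᵢ[ℝ] V := fun θ => (e.trans (LinearIsometryEquiv.piLpCongrRight 2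
    fun _ => rotation (Circle.exp (Real.pi * θ)))).trans e.symm
  refine ⟨ρ, fun x => ?_, fun x => ?_, ?_⟩
  · simp [ρ]
  · rw [← e.symm_apply_apply (-x), map_neg]
    exact congrArg e.symm (PiLp.ext fun i => by simp)
  · refine e.symm.continuous.comp ((PiLp.continuous_toLp 2 _).comp (continuous_pi fun i => ?_))
    change Continuous fun u : ℝ × V => (Circle.exp (Real.pi * u.1) : ℂ) * e u.2 i
    fun_prop

end EvenDimension

section Block

open Filter Metric
open scoped Topology

variable {ι V : Type*} [NormedAddCommGroup V] {R : ι → ℝ} {P : ℝ}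

/-- The block of phase space in which the `i`-th position has norm at most `R i` and all speeds are
at most `P`; a state is a pair (positions, velocities). -/
def block (R : ι → ℝ) (P : ℝ) : Set ((ι → V) × (ι → V)) :=
  (univ.pi fun i => closedBall 0 (R i)) ×ˢ univ.pi fun _ => closedBall 0 P

theorem mem_block {z : (ι → V) × (ι → V)} :
    z ∈ block R P ↔ (∀ i, ‖z.1 i‖ ≤ R i) ∧ ∀ i, ‖z.2 i‖ ≤ P := by
  simp [block]

theorem isClosed_block : IsClosed (block R P : Set ((ι → V) × (ι → V))) :=
  (isClosed_set_pi fun _ _ => isClosed_closedBall).prod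
    (isClosed_set_pi fun _ _ => isClosed_closedBall)

theorem isCompact_block [ProperSpace V] : IsCompact (block R P : Set ((ι → V) × (ι → V))) :=
  (isCompact_univ_pi fun _ => isCompact_closedBall _ _).prod
    (isCompact_univ_pi fun _ => isCompact_closedBall _ _)

theorem interior_block_nonempty [Finite ι] (hR : ∀ i, 0 < R i) (hP : 0 < P) :
    (interior (block R P : Set ((ι → V) × (ι → V)))).Nonempty :=
  ⟨0, mem_interior_iff_mem_nhds.2 <| prod_mem_nhds
    (set_pi_mem_nhds finite_univ fun i _ => closedBall_mem_nhds _ (hR i))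
    (set_pi_mem_nhds finite_univ fun _ _ => closedBall_mem_nhds _ hP)⟩

theorem convex_block [NormedSpace ℝ V] : Convex ℝ (block R P : Set ((ι → V) × (ι → V))) :=
  Convex.prod (convex_pi fun _ _ => convex_closedBall _ _)
    (convex_pi fun _ _ => convex_closedBall _ _)

variable [InnerProductSpace ℝ V]

/-- The states of the block in which some particle lies on the boundary of its ball without moving
inwards. -/
def blockExit (R : ι → ℝ) (P : ℝ) : Set ((ι → V) × (ι → V)) :=
  {z ∈ block R P | ∃ i, ‖z.1 i‖ = R i ∧ 0 ≤ ⟪z.1 i, z.2 i⟫}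

theorem isClosed_blockExit [Finite ι] : IsClosed (blockExit R P : Set ((ι → V) × (ι → V))) := by
  have hunion : (blockExit R P : Set ((ι → V) × (ι → V))) =
      block R P ∩ ⋃ i, {z | ‖z.1 i‖ = R i} ∩ {z | 0 ≤ ⟪z.1 i, z.2 i⟫} := by
    ext z
    simp [blockExit]
  rw [hunion]
  exact isClosed_block.inter <| isClosed_iUnion_of_finite fun i =>
    (isClosed_eq (by fun_prop) continuous_const).inter
      (isClosed_le continuous_const (by fun_prop))

/- Rotating all positions and velocities simultaneously preserves the block and its exit set; it
ends at `z ↦ -z`, which fixes no state with a particle on the boundary of its ball. -/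
theorem exists_block_homotopy [FiniteDimensional ℝ V]
    (heven : Even (Module.finrank ℝ V)) (hR : ∀ i, 0 < R i) :
    ∃ H : ℝ → (ι → V) × (ι → V) → (ι → V) × (ι → V), Continuous (Function.uncurry H) ∧
      (∀ θ, MapsTo (H θ) (block R P) (block R P)) ∧
      (∀ θ, MapsTo (H θ) (blockExit R P) (blockExit R P)) ∧
      (∀ z, H 0 z = z) ∧ ∀ z ∈ blockExit R P, H 1 z ≠ z := by
  obtain ⟨ρ, hρ₀, hρ₁, hρ⟩ := exists_linearIsometryEquiv_homotopy_neg heven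
  refine ⟨fun θ z => (fun i => ρ θ (z.1 i), fun i => ρ θ (z.2 i)), ?_, fun θ z hz => ?_,
    fun θ z hz => ?_, fun z => by simp [hρ₀], ?_⟩
  · exact (continuous_pi fun i => hρ.comp (by fun_prop : Continuous
      fun u : ℝ × (ι → V) × (ι → V) => (u.1, u.2.1 i))).prodMk (continuous_pi fun i =>
      hρ.comp (by fun_prop : Continuous fun u : ℝ × (ι → V) × (ι → V) => (u.1, u.2.2 i)))
  · simpa [mem_block] using hz
  · simpa [blockExit, mem_block, LinearIsometryEquiv.inner_map_map] using hz
  · rintro z ⟨_, i, hi, _⟩ hz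
    have hneg : -z.1 i = z.1 i := (hρ₁ _).symm.trans (congrFun (congrArg Prod.fst hz) i)
    exact ne_neg_of_mem_sphere ℝ (hR i).ne' ⟨z.1 i, mem_sphere_zero_iff_norm.2 hi⟩
      (Subtype.ext hneg.symm)

variable [Fintype ι] {A : ι → ℝ → (ι → V) → (ι → V) → V} {T : ℝ}

theorem exists_flow_isMotion [FiniteDimensional ℝ V]
    (hA : ∀ i, ContDiff ℝ 1 fun u : ℝ × (ι → V) × (ι → V) => A i u.1 u.2.1 u.2.2)
    (hT : 0 < T) (hper : ∀ i t q p, A i (t + T) q p = A i t q p) {r : ℝ} (hr : 0 < r) :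
    ∃ φ : (ι → V) × (ι → V) → ℝ → (ι → V) × (ι → V), (∀ x, φ x 0 = x) ∧
      Continuous (Function.uncurry φ) ∧ (∀ x, φ x T = x → Function.Periodic (φ x) T) ∧
      ∀ x, IsMotion A (fun s => (φ x s).1) (fun s => (φ x s).2) (φ x ⁻¹' ball 0 r) := by
  obtain ⟨w, K, L, hlip, hcont, hbound, hwper, hw⟩ := exists_cutoff_of_periodic
    (v := fun t (z : (ι → V) × (ι → V)) => (z.2, fun i => A i t z.1 z.2))
    (contDiff_phaseField hA) hT (fun t => by simp only [hper]) hr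
  choose φ hφ₀ hφ using exists_isIntegralCurve_of_bounded hlip hcont hbound 0
  refine ⟨φ, hφ₀, continuous_uncurry_of_isIntegralCurve hlip hφ₀ hφ,
    fun x hx => periodic_of_isIntegralCurve hlip hwper (hφ x) (hx.trans (hφ₀ x).symm),
    fun x => isMotion_of_hasDerivAt fun t ht => ?_⟩
  simpa only [hw t (ball_subset_closedBall ht)] using hφ x t

theorem TangentMotionsLeave.isWazewskiPair_block [CompleteSpace V]
    (hex : TangentMotionsLeave A R) (hR : ∀ i, 0 < R i)
    (hA : ∀ i, ContDiff ℝ 1 fun u : ℝ × (ι → V) × (ι → V) => A i u.1 u.2.1 u.2.2)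
    (hin : ∀ i t, ∀ z ∈ block R P, ‖z.2 i‖ = P → ⟪z.2 i, A i t z.1 z.2⟫ < 0)
    {φ : (ι → V) × (ι → V) → ℝ → (ι → V) × (ι → V)} (hφ : ∀ x, Continuous (φ x))
    {U : Set ((ι → V) × (ι → V))} (hU : IsOpen U) (hblock : block R P ⊆ U)
    (hmot : ∀ x, IsMotion A (fun s => (φ x s).1) (fun s => (φ x s).2) (φ x ⁻¹' U)) :
    IsWazewskiPair φ (block R P) (blockExit R P) where
  isClosed := isClosed_block
  isClosed_exit := isClosed_blockExit
  frequently_notMem := by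
    rintro x t ⟨hx, j, hj, hjp⟩
    refine (hex.frequently_exists_lt_norm hA (hU.preimage (hφ x)) (hmot x) (hblock hx) (hR j) hj
      hjp).mono fun s ⟨i, hi⟩ hs => ?_
    exact ((mem_block.1 hs).1 i).not_gt hi
  eventually_mem := by
    intro x t hx hxe
    obtain ⟨hq, hp⟩ := mem_block.1 hx
    have hmot := hmot x t (hblock hx)
    simp only [mem_block, eventually_and, eventually_all]
    refine ⟨fun i => eventually_nhdsGT_norm_le (hmot i).1 (hq i) fun hi => ?_,
      fun i => eventually_nhdsGT_norm_le (hmot i).2 (hp i) (hin i t _ hx)⟩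
    exact not_le.1 fun hi' => hxe ⟨hx, i, hi, hi'⟩

theorem TangentMotionsLeave.exists_periodic_isMotion [FiniteDimensional ℝ V]
    (hex : TangentMotionsLeave A R) (heven : Even (Module.finrank ℝ V)) (hR : ∀ i, 0 < R i)
    (hA : ∀ i, ContDiff ℝ 1 fun u : ℝ × (ι → V) × (ι → V) => A i u.1 u.2.1 u.2.2)
    (hT : 0 < T) (hper : ∀ i t q p, A i (t + T) q p = A i t q p) (hP : 0 < P)
    (hin : ∀ i t, ∀ z ∈ block R P, ‖z.2 i‖ = P → ⟪z.2 i, A i t z.1 z.2⟫ < 0) :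
    ∃ q p : ℝ → ι → V, IsMotion A q p univ ∧ Function.Periodic q T ∧ Function.Periodic p T ∧
      ∀ t i, ‖q t i‖ < R i := by
  obtain ⟨r, hr, hblock⟩ :=
    (isCompact_block (V := V) (R := R) (P := P)).isBounded.subset_ball_lt 0 0
  obtain ⟨φ, hφ₀, hφ, hφper, hmot⟩ := exists_flow_isMotion hA hT hper hr
  obtain ⟨H, hH, hHW, hHWm, hH₀, hH₁⟩ := exists_block_homotopy heven hR (P := P)
  have hpair : IsWazewskiPair φ _ _ := hex.isWazewskiPair_block hR hA hin
    (fun x => hφ.comp (.prodMk_right x)) isOpen_ball hblock hmot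
  obtain ⟨x, -, hxT, hx⟩ := hpair.exists_apply_eq_self hφ₀ hφ hT convex_block isCompact_block
    (interior_block_nonempty hR hP) hH hHW hHWm hH₀ hH₁
  have hxper := hφper x hxT
  have hmem : ∀ t, φ x t ∈ block R P := fun t => by
    obtain ⟨s, hs, hts⟩ := hxper.exists_mem_Ico₀ hT t
    exact hts ▸ hx s (Ico_subset_Icc_self hs)
  have hmotion : IsMotion A (fun s => (φ x s).1) (fun s => (φ x s).2) univ :=
    fun t _ => hmot x t (hblock (hmem t))
  exact ⟨_, _, hmotion, hxper.comp Prod.fst, hxper.comp Prod.snd, fun t =>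
    hex.norm_lt_of_eventually_le isOpen_univ hmotion (mem_univ t) <|
      .of_forall fun s => (mem_block.1 (hmem s)).1⟩

end Block

section Friction

open Filter

variable {ι V : Type*} [NormedAddCommGroup V] [InnerProductSpace ℝ V] {T : ℝ}

/- At speed `P` friction dissipates energy at a rate of at least `|c| P²`, while bounded forces
supply at most `B P`. -/
theorem eventually_inner_friction_add_neg {g : ℝ → V → V → V} {d c r : ℝ} (hT : 0 < T)
    (hper : ∀ t q p, g (t + T) q p = g t q p) (hc : c < 0)
    (hfr : ∀ t ∈ Icc (0 : ℝ) T, ∀ q, ‖q‖ ≤ r → ∀ p, d < ⟪p, p⟫ → ⟪g t q p, p⟫ / ⟪p, p⟫ ≤ c)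
    (B : ℝ) :
    ∀ᶠ P in atTop, ∀ t q p b, ‖q‖ ≤ r → ‖p‖ = P → ‖b‖ ≤ B → ⟪p, g t q p + b⟫ < 0 := by
  filter_upwards [eventually_gt_atTop 0, eventually_gt_atTop (B / -c),
    (tendsto_pow_atTop two_ne_zero).eventually_gt_atTop d] with P hP hPB hPd t q p b hq hp hb
  have hpp : ⟪p, p⟫ = P ^ 2 := by rw [real_inner_self_eq_norm_sq, hp]
  have hfric : ⟪p, g t q p⟫ ≤ c * P ^ 2 := by
    obtain ⟨s, hs, hts⟩ := Function.Periodic.exists_mem_Ico₀ (f := fun t => g t q p)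
      (fun t => hper t q p) hT t
    have hle := hfr s (Ico_subset_Icc_self hs) q hq p (hpp ▸ hPd)
    rw [hpp, div_le_iff₀ (by positivity), real_inner_comm] at hle
    simpa only [hts] using hle
  have hbounded : ⟪p, b⟫ ≤ P * B := (real_inner_le_norm p b).trans (by rw [hp]; gcongr)
  rw [div_lt_iff₀ (neg_pos.2 hc)] at hPB
  rw [inner_add_right]
  nlinarith

theorem forced_oscillations_disc_blocks_general [Fintype ι] [FiniteDimensional ℝ V]
    (heven : Even (Module.finrank ℝ V)) (hT : 0 < T) {R : ι → ℝ} (hR : ∀ i, 0 < R i)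
    {f ffr : ι → ℝ → V → V → V} {fint : ι → ℝ → (ι → V) → (ι → V) → V}
    (hf_smooth : ∀ i, ContDiff ℝ 1 fun u : ℝ × V × V => f i u.1 u.2.1 u.2.2)
    (hffr_smooth : ∀ i, ContDiff ℝ 1 fun u : ℝ × V × V => ffr i u.1 u.2.1 u.2.2)
    (hfint_smooth : ∀ i, ContDiff ℝ 1 fun u : ℝ × (ι → V) × (ι → V) => fint i u.1 u.2.1 u.2.2)
    (hf_per : ∀ i t q p, f i (t + T) q p = f i t q p)
    (hffr_per : ∀ i t q p, ffr i (t + T) q p = ffr i t q p)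
    (hfint_per : ∀ i t q p, fint i (t + T) q p = fint i t q p)
    (hf_bdd : ∀ i, ∃ C : ℝ, ∀ t q p, ‖f i t q p‖ ≤ C)
    (hfint_bdd : ∀ i, ∃ C : ℝ, ∀ t q p, ‖fint i t q p‖ ≤ C)
    (hfr : ∀ i, ∃ d > (0 : ℝ), ∃ c < (0 : ℝ), ∀ t ∈ Icc (0 : ℝ) T, ∀ q, ‖q‖ ≤ R i →
      ∀ p, d < ⟪p, p⟫ → ⟪ffr i t q p, p⟫ / ⟪p, p⟫ ≤ c)
    (hexit : TangentMotionsLeave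
      (fun i t q p => f i t (q i) (p i) + ffr i t (q i) (p i) + fint i t q p) R) :
    ∃ q p : ℝ → ι → V,
      IsMotion (fun i t q p => f i t (q i) (p i) + ffr i t (q i) (p i) + fint i t q p) q p univ ∧
      Function.Periodic q T ∧ Function.Periodic p T ∧ ∀ t i, ‖q t i‖ < R i := by
  choose d _ c hc hfr using hfr
  choose C hC using hf_bdd
  choose C' hC' using hfint_bdd
  obtain ⟨P, hP, hin⟩ := ((eventually_gt_atTop 0).and (eventually_all.2 fun i =>
    eventually_inner_friction_add_neg hT (hffr_per i) (hc i) (hfr i) (C i + C' i))).exists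
  refine hexit.exists_periodic_isMotion heven hR (fun i => ?_) hT
    (fun i t q p => by simp only [hf_per, hffr_per, hfint_per]) hP (fun i t z hz hi => ?_)
  · have hcomponent : ContDiff ℝ 1 fun u : ℝ × (ι → V) × (ι → V) => (u.1, u.2.1 i, u.2.2 i) := by
      fun_prop
    exact (((hf_smooth i).comp hcomponent).add ((hffr_smooth i).comp hcomponent)).add
      (hfint_smooth i)
  · rw [add_comm (f i t _ _), add_assoc]
    exact hin i t _ _ _ ((mem_block.1 hz).1 i) hi
      (norm_add_le_of_le (hC i t _ _) (hC' i t _ _))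

end Friction

theorem forced_oscillations_disc_blocks
    (n : ℕ) (hn : 1 ≤ n) (T : ℝ) (hT : 0 < T)
    (R : Fin n → ℝ) (hR : ∀ i, 0 < R i)
    (f ffr : Fin n → ℝ → EuclideanSpace ℝ (Fin 2) → EuclideanSpace ℝ (Fin 2) →
      EuclideanSpace ℝ (Fin 2))
    (fint : Fin n → ℝ → (Fin n → EuclideanSpace ℝ (Fin 2)) →
      (Fin n → EuclideanSpace ℝ (Fin 2)) → EuclideanSpace ℝ (Fin 2))
    (hf_smooth : ∀ i, ContDiff ℝ (⊤ : ℕ∞)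
      (fun u : ℝ × EuclideanSpace ℝ (Fin 2) × EuclideanSpace ℝ (Fin 2) =>
        f i u.1 u.2.1 u.2.2))
    (hffr_smooth : ∀ i, ContDiff ℝ (⊤ : ℕ∞)
      (fun u : ℝ × EuclideanSpace ℝ (Fin 2) × EuclideanSpace ℝ (Fin 2) =>
        ffr i u.1 u.2.1 u.2.2))
    (hfint_smooth : ∀ i, ContDiff ℝ (⊤ : ℕ∞)
      (fun u : ℝ × (Fin n → EuclideanSpace ℝ (Fin 2)) ×
          (Fin n → EuclideanSpace ℝ (Fin 2)) => fint i u.1 u.2.1 u.2.2))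
    (hf_per : ∀ i t q p, f i (t + T) q p = f i t q p)
    (hffr_per : ∀ i t q p, ffr i (t + T) q p = ffr i t q p)
    (hfint_per : ∀ i t q p, fint i (t + T) q p = fint i t q p)
    -- (1) boundedness of the external and interaction forces
    (hf_bdd : ∀ i, ∃ C : ℝ, ∀ t q p, ‖f i t q p‖ ≤ C)
    (hfint_bdd : ∀ i, ∃ C : ℝ, ∀ t q p, ‖fint i t q p‖ ≤ C)
    -- (2) friction condition (H1):
    -- sup { ⟨ffrᵢ(t,q,p),p⟩/⟨p,p⟩ : t ∈ [0,T], |q| ≤ Rᵢ, ⟨p,p⟩ > dᵢ } < 0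
    (hfr : ∀ i, ∃ d > (0 : ℝ), ∃ c < (0 : ℝ), ∀ t ∈ Icc (0 : ℝ) T,
      ∀ q : EuclideanSpace ℝ (Fin 2), ‖q‖ ≤ R i →
      ∀ p : EuclideanSpace ℝ (Fin 2), d < ⟪p, p⟫ →
        ⟪ffr i t q p, p⟫ / ⟪p, p⟫ ≤ c)
    -- (3) solutions starting on the boundary of the product of discs
    -- (tangentially) leave it immediately
    (hexit : ∀ t₀ : ℝ, ∀ q0 p0 : Fin n → EuclideanSpace ℝ (Fin 2),
      (∀ j, ‖q0 j‖ ≤ R j) →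
      (∃ i, ‖q0 i‖ = R i) →
      (∀ i, ‖q0 i‖ = R i → ⟪q0 i, p0 i⟫ = 0) →
      ∀ (I : Set ℝ) (q p : ℝ → Fin n → EuclideanSpace ℝ (Fin 2)),
        IsOpen I → t₀ ∈ I →
        IsSolution1 n f ffr fint q p I → q t₀ = q0 → p t₀ = p0 →
        ∃ ε > (0 : ℝ), ∀ t ∈ Ioo t₀ (t₀ + ε), t ∈ I →
          ∃ j, R j < ‖q t j‖) :
    -- conclusion: a T-periodic solution staying strictly inside the product of discs
    ∃ q p : ℝ → Fin n → EuclideanSpace ℝ (Fin 2),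
      IsSolution1 n f ffr fint q p univ ∧
      (∀ t i, q (t + T) i = q t i) ∧
      (∀ t i, p (t + T) i = p t i) ∧
      (∀ t i, ‖q t i‖ < R i) := by
  have hle : (1 : WithTop ℕ∞) ≤ (⊤ : ℕ∞) := by exact_mod_cast le_top
  obtain ⟨q, p, h, hq, hp, hlt⟩ := forced_oscillations_disc_blocks_general (by simp) hT hR
    (fun i => (hf_smooth i).of_le hle) (fun i => (hffr_smooth i).of_le hle)
    (fun i => (hfint_smooth i).of_le hle) hf_per hffr_per hfint_per hf_bdd hfint_bdd hfr hexit
  exact ⟨q, p, h, fun t => congrFun (hq t), fun t => congrFun (hp t), hlt⟩
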